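/- arXiv:1704.08830 — 5 statements merged into one kernel-verified Lean document; each statement's English description precedes it below -/
import Mathlib

section
/- Let V be a type and D = (V, A) a digraph, where A ⊆ V × V is a set of loop-free arcs. Then A can be partitioned into dicycles (i.e., there is a partition of A each of whose parts is the arc set of a directed cycle of D) if and only if D is balanced, i.e., for every subset X ⊆ V the cardinality of the set of ingoing arcs of X equals the cardinality of the set of outgoing arcs of X. -/
/-!
A dicycle crosses every cut equally often in both directions, so a partition into dicycles forces
balancedness. For the converse, every arc of a balanced digraph lies on a dicycle, and deleting a
dicycle keeps the digraph balanced; a greedy enumeration therefore settles the countable case.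

For uncountable digraphs one deletes many arcs at once. The key fact (`IsBalanced.diff_of_closed`)
is that deleting a set `B` of at most `ν` arcs keeps the digraph balanced if any two end vertices
of `B` which some cut of size at most `ν` separates are also separated by a cut contained in `B`.
This is a closure condition on `B`, so such sets are obtained by closing off under finitary
operations.

The induction on an infinite cardinal `μ` (`exists_partitionable_finClosed`) proves that a balanced
digraph has, for each operation sending finite sets of arcs to sets of at most `μ` arcs, a closed
set of at most `μ` arcs which can be partitioned into dicycles. Such a set is built as a transfinite
union of smaller disjoint pieces, each obtained from the induction hypothesis in the digraph
remaining after the deletion of the earlier ones; the key fact keeps this remainder balanced.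
Applied to the constant operation with value the full arc set, this is the theorem.
-/

/-- The set of arcs of `A` going out of the vertex set `X`. -/
def outArcs {V : Type*} (A : Set (V × V)) (X : Set V) : Set (V × V) :=
  {e ∈ A | e.1 ∈ X ∧ e.2 ∉ X}

/-- The set of arcs of `A` going into the vertex set `X`. -/
def inArcs {V : Type*} (A : Set (V × V)) (X : Set V) : Set (V × V) :=
  {e ∈ A | e.1 ∉ X ∧ e.2 ∈ X}

/-- A digraph (given by its arc set `A`) is balanced if for each vertex set the
cardinalities of the ingoing and the outgoing arcs coincide. -/
def IsBalanced {V : Type*} (A : Set (V × V)) : Prop :=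
  ∀ X : Set V, Cardinal.mk (inArcs A X) = Cardinal.mk (outArcs A X)

/-- `C` is (the arc set of) a directed cycle of the digraph with arc set `A`. -/
def IsDicycle {V : Type*} (A : Set (V × V)) (C : Set (V × V)) : Prop :=
  ∃ (n : ℕ) (f : ZMod n → V), 2 ≤ n ∧ Function.Injective f ∧
    C = {p | ∃ i : ZMod n, p = (f i, f (i + 1))} ∧ C ⊆ A

/-- `P` is a partition of the arc set `A` into dicycles. -/
def IsDicyclePartition {V : Type*} (A : Set (V × V)) (P : Set (Set (V × V))) : Prop :=
  (∀ C ∈ P, IsDicycle A C) ∧ P.PairwiseDisjoint id ∧ ⋃₀ P = A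

section DicyclePartition

open Cardinal

universe u

variable {V : Type u}

/-! ### Dicycles and balanced digraphs -/

/-- Two sets have the same cardinality if the fibres of some map on them do. -/
lemma mk_eq_of_fibres {α : Type u} {Q : Type*} (f : α → Q) (S T : Set α)
    (h : ∀ q, #{e | e ∈ S ∧ f e = q} = #{e | e ∈ T ∧ f e = q}) : #S = #T := by
  have key : ∀ q, Nonempty ({x : S // f x = q} ≃ {x : T // f x = q}) := by
    intro q
    obtain ⟨g⟩ := Cardinal.eq.1 (h q)
    exact ⟨(Equiv.subtypeSubtypeEquivSubtypeInter (· ∈ S) (fun e => f e = q)).trans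
      (g.trans (Equiv.subtypeSubtypeEquivSubtypeInter (· ∈ T) (fun e => f e = q)).symm)⟩
  let g := fun q => Classical.choice (key q)
  exact Cardinal.eq.2 ⟨(Equiv.sigmaFiberEquiv (fun x : S => f x)).symm.trans
    ((Equiv.sigmaCongrRight g).trans (Equiv.sigmaFiberEquiv (fun x : T => f x)))⟩

lemma IsDicycle.finite {A C : Set (V × V)} (h : IsDicycle A C) : C.Finite := by
  obtain ⟨n, f, hn, -, rfl, -⟩ := h
  have : NeZero n := ⟨by omega⟩
  refine (Set.finite_range (fun i : ZMod n => (f i, f (i + 1)))).subset ?_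
  rintro p ⟨i, rfl⟩
  exact ⟨i, rfl⟩

lemma IsDicycle.subset {A C : Set (V × V)} (h : IsDicycle A C) : C ⊆ A := by
  obtain ⟨n, f, -, -, -, h⟩ := h
  exact h

lemma IsDicycle.mono {A A' C : Set (V × V)} (h : IsDicycle A C) (h' : C ⊆ A') :
    IsDicycle A' C := by
  obtain ⟨n, f, hn, hf, hC, -⟩ := h
  exact ⟨n, f, hn, hf, hC, h'⟩

/-- A dicycle leaves each vertex set as often as it enters it: the successor map is a bijection
from the positions on the cycle to themselves. -/
lemma IsDicycle.balanced {A C : Set (V × V)} (h : IsDicycle A C) : IsBalanced C := by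
  intro X
  obtain ⟨n, f, hn, hf, rfl, -⟩ := h
  have : NeZero n := ⟨by omega⟩
  have hinj : Function.Injective (fun i : ZMod n => (f i, f (i + 1))) := by
    intro i j hij
    exact hf (congrArg Prod.fst hij)
  have e1 : inArcs {p | ∃ i : ZMod n, p = (f i, f (i + 1))} X
      = (fun i : ZMod n => (f i, f (i + 1))) '' {i | f i ∉ X ∧ f (i + 1) ∈ X} := by
    ext p
    constructor
    · rintro ⟨⟨i, rfl⟩, h1, h2⟩
      exact ⟨i, ⟨h1, h2⟩, rfl⟩
    · rintro ⟨i, ⟨h1, h2⟩, rfl⟩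
      exact ⟨⟨i, rfl⟩, h1, h2⟩
  have e2 : outArcs {p | ∃ i : ZMod n, p = (f i, f (i + 1))} X
      = (fun i : ZMod n => (f i, f (i + 1))) '' {i | f i ∈ X ∧ f (i + 1) ∉ X} := by
    ext p
    constructor
    · rintro ⟨⟨i, rfl⟩, h1, h2⟩
      exact ⟨i, ⟨h1, h2⟩, rfl⟩
    · rintro ⟨i, ⟨h1, h2⟩, rfl⟩
      exact ⟨⟨i, rfl⟩, h1, h2⟩
  rw [e1, e2]
  have hcard : {i : ZMod n | f i ∉ X ∧ f (i + 1) ∈ X}.ncard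
      = {i : ZMod n | f i ∈ X ∧ f (i + 1) ∉ X}.ncard := by
    have h1 : {i : ZMod n | f i ∉ X ∧ f (i + 1) ∈ X}.ncard
        + {i : ZMod n | f i ∈ X ∧ f (i + 1) ∈ X}.ncard = {i : ZMod n | f (i + 1) ∈ X}.ncard := by
      rw [← Set.ncard_union_eq]
      · congr 1; ext i; simp only [Set.mem_union, Set.mem_ofPred_eq]; tauto
      · rw [Set.disjoint_left]; rintro i ⟨h, -⟩ ⟨h', -⟩; exact h h'
    have h2 : {i : ZMod n | f i ∈ X ∧ f (i + 1) ∉ X}.ncard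
        + {i : ZMod n | f i ∈ X ∧ f (i + 1) ∈ X}.ncard = {i : ZMod n | f i ∈ X}.ncard := by
      rw [← Set.ncard_union_eq]
      · congr 1; ext i; simp only [Set.mem_union, Set.mem_ofPred_eq]; tauto
      · rw [Set.disjoint_left]; rintro i ⟨-, h⟩ ⟨-, h'⟩; exact h h'
    have h3 : {i : ZMod n | f i ∈ X}.ncard = {i : ZMod n | f (i + 1) ∈ X}.ncard := by
      have : {i : ZMod n | f i ∈ X} = (fun i => i + 1) '' {i : ZMod n | f (i + 1) ∈ X} := by
        ext i
        simp only [Set.mem_ofPred_eq, Set.mem_image]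
        constructor
        · intro h
          exact ⟨i - 1, by simpa using h, by simp⟩
        · rintro ⟨j, h, rfl⟩
          exact h
      rw [this, Set.ncard_image_of_injective _ (add_left_injective 1)]
    omega
  have hnc : ∀ S : Set (ZMod n), #((fun i : ZMod n => (f i, f (i + 1))) '' S) = S.ncard := by
    intro S
    rw [← Set.ncard_image_of_injective S hinj, ← Set.cast_ncard (Set.toFinite _)]
  rw [hnc, hnc, hcard]

/-- Each dicycle of the partition contributes equally many ingoing and outgoing arcs to a cut. -/
lemma IsDicyclePartition.balanced {A : Set (V × V)} {P : Set (Set (V × V))}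
    (hP : IsDicyclePartition A P) : IsBalanced A := by
  classical
  intro X
  obtain ⟨hc, hd, hU⟩ := hP
  have hex : ∀ e, ∃ C : Set (V × V), e ∈ A → C ∈ P ∧ e ∈ C := by
    intro e
    by_cases he : e ∈ A
    · rw [← hU] at he
      obtain ⟨C, hC, heC⟩ := he
      exact ⟨C, fun _ => ⟨hC, heC⟩⟩
    · exact ⟨∅, fun h => absurd h he⟩
  choose f hf using hex
  have hfu : ∀ C ∈ P, ∀ e ∈ C, f e = C := by
    intro C hC e heC
    have heA : e ∈ A := hU ▸ ⟨C, hC, heC⟩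
    obtain ⟨h1, h2⟩ := hf e heA
    by_contra hne
    exact Set.disjoint_left.1 (hd h1 hC hne) h2 heC
  apply mk_eq_of_fibres f
  intro C
  by_cases hC : C ∈ P
  · have e1 : {e | e ∈ inArcs A X ∧ f e = C} = inArcs C X := by
      ext e
      constructor
      · rintro ⟨⟨h1, h2⟩, rfl⟩
        exact ⟨(hf e h1).2, h2⟩
      · rintro ⟨h1, h2⟩
        exact ⟨⟨(hc C hC).subset h1, h2⟩, hfu C hC e h1⟩
    have e2 : {e | e ∈ outArcs A X ∧ f e = C} = outArcs C X := by
      ext e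
      constructor
      · rintro ⟨⟨h1, h2⟩, rfl⟩
        exact ⟨(hf e h1).2, h2⟩
      · rintro ⟨h1, h2⟩
        exact ⟨⟨(hc C hC).subset h1, h2⟩, hfu C hC e h1⟩
    rw [e1, e2]
    exact (hc C hC).balanced X
  · have e1 : {e | e ∈ inArcs A X ∧ f e = C} = ∅ := by
      ext e
      simp only [Set.mem_ofPred_eq, Set.mem_empty_iff_false, iff_false]
      rintro ⟨⟨h1, h2⟩, rfl⟩
      exact hC (hf e h1).1
    have e2 : {e | e ∈ outArcs A X ∧ f e = C} = ∅ := by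
      ext e
      simp only [Set.mem_ofPred_eq, Set.mem_empty_iff_false, iff_false]
      rintro ⟨⟨h1, h2⟩, rfl⟩
      exact hC (hf e h1).1
    rw [e1, e2]

lemma mk_inArcs_add {D B : Set (V × V)} (hB : B ⊆ D) (X : Set V) :
    #(inArcs (D \ B) X) + #(inArcs B X) = #(inArcs D X) := by
  rw [← mk_union_of_disjoint]
  · congr 2
    ext e
    have := @hB e
    simp only [inArcs, Set.mem_union, Set.mem_ofPred_eq, Set.mem_sdiff]
    tauto
  · rw [Set.disjoint_left]
    rintro e ⟨h, -⟩ ⟨h', -⟩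
    exact h.2 h'

lemma mk_outArcs_add {D B : Set (V × V)} (hB : B ⊆ D) (X : Set V) :
    #(outArcs (D \ B) X) + #(outArcs B X) = #(outArcs D X) := by
  rw [← mk_union_of_disjoint]
  · congr 2
    ext e
    have := @hB e
    simp only [outArcs, Set.mem_union, Set.mem_ofPred_eq, Set.mem_sdiff]
    tauto
  · rw [Set.disjoint_left]
    rintro e ⟨h, -⟩ ⟨h', -⟩
    exact h.2 h'

/-- Deleting a finite balanced set of arcs, e.g. a dicycle, preserves balancedness. -/
lemma IsBalanced.diff_finite {D B : Set (V × V)} (hD : IsBalanced D) (hB : IsBalanced B)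
    (hBD : B ⊆ D) (hfin : B.Finite) : IsBalanced (D \ B) := by
  intro X
  have h1 := mk_inArcs_add hBD X
  rw [hD X, ← mk_outArcs_add hBD X, hB X] at h1
  refine Cardinal.eq_of_add_eq_add_right h1 ?_
  exact (hfin.subset (fun e he => he.1)).lt_aleph0

/-- In a balanced digraph every arc lies on a dicycle. Nothing leaves the set of vertices reachable
from the head of the arc, hence nothing enters it, so it contains the tail; a shortest walk from
head to tail closes the arc up to a dicycle. -/
lemma IsBalanced.exists_dicycle {D : Set (V × V)} (hD : IsBalanced D)
    {e : V × V} (he : e ∈ D) (hne : e.1 ≠ e.2) : ∃ C, IsDicycle D C ∧ e ∈ C := by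
  classical
  let W : ℕ → V → Prop := fun n w =>
    ∃ g : ℕ → V, g 0 = e.2 ∧ g n = w ∧ ∀ i < n, (g i, g (i + 1)) ∈ D
  have hreach : ∃ n, W n e.1 := by
    let X : Set V := {w | ∃ n, W n w}
    have hout : outArcs D X = ∅ := by
      ext a
      simp only [Set.mem_empty_iff_false, iff_false]
      rintro ⟨haD, ⟨n, g, g0, gn, hg⟩, h2⟩
      refine h2 ⟨n + 1, fun i => if i ≤ n then g i else a.2, by simpa using g0, by simp, ?_⟩
      intro i hi
      rcases Nat.lt_succ_iff_lt_or_eq.1 hi with h | rfl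
      · have h1 : i ≤ n := h.le
        have h2 : i + 1 ≤ n := h
        simp only [h1, h2, if_true]
        exact hg i h
      · simpa [gn] using haD
    have hin : inArcs D X = ∅ := by
      rw [← Set.isEmpty_coe_sort, ← mk_eq_zero_iff, hD X, hout]
      simp
    by_contra hcon
    have : e ∈ inArcs D X := ⟨he, hcon, 0, fun _ => e.2, rfl, rfl, by simp⟩
    rw [hin] at this
    exact this
  obtain ⟨g, g0, gn, hg⟩ := Nat.find_spec hreach
  set n := Nat.find hreach with hn
  have hmin : ∀ m < n, ¬ W m e.1 := fun m hm => Nat.find_min hreach hm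
  have hinj : ∀ i j, i < j → j ≤ n → g i ≠ g j := by
    -- otherwise the stretch between the two visits could be cut out
    intro i j hij hj heq
    apply hmin (n - (j - i)) (by omega)
    refine ⟨fun k => if k ≤ i then g k else g (k + (j - i)), by simpa using g0, ?_, ?_⟩
    · by_cases h : n - (j - i) ≤ i
      · have hjn : j = n := by omega
        have : n - (j - i) = i := by omega
        simp only [this, le_refl, if_true]
        rw [heq, hjn, gn]
      · simp only [h, if_false]
        rw [show n - (j - i) + (j - i) = n by omega, gn]
    · intro k hk
      rcases lt_trichotomy k i with h | rfl | h
      · have h1 : k ≤ i := h.le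
        have h2 : k + 1 ≤ i := h
        simp only [h1, h2, if_true]
        exact hg k (by omega)
      · simp only [le_refl, if_true, show ¬ (k + 1 ≤ k) by omega, if_false]
        rw [heq, show k + 1 + (j - k) = j + 1 by omega]
        exact hg j (by omega)
      · simp only [show ¬ (k ≤ i) by omega, show ¬ (k + 1 ≤ i) by omega, if_false]
        rw [show k + 1 + (j - i) = (k + (j - i)) + 1 by omega]
        exact hg _ (by omega)
  have hn1 : 1 ≤ n := by
    by_contra h
    have h0 : n = 0 := by omega
    rw [h0] at gn
    exact hne (gn.symm.trans g0)
  let f : Fin (n + 1) → V := fun i => g i.val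
  have hfs : ∀ i : Fin (n + 1), (f i, f (i + 1)) ∈ D := by
    intro i
    have hv := Fin.val_add_one (n := n) i
    by_cases h : i = Fin.last n
    · subst h
      simpa [f, g0, gn] using he
    · rw [if_neg h] at hv
      have hlt : i.val < n := Fin.val_lt_last h
      have := hg i.val hlt
      rw [← hv] at this
      exact this
  have hlast : e = (f (Fin.last n), f (Fin.last n + 1)) :=
    Prod.ext (by simp [f, gn]) (by simp [f, g0])
  have hfinj : Function.Injective f := by
    intro i j hij
    apply Fin.ext
    rcases lt_trichotomy i.val j.val with h | h | h
    · exact absurd hij (hinj _ _ h (by omega))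
    · exact h
    · exact absurd hij.symm (hinj _ _ h (by omega))
  -- `ZMod (n + 1)` unfolds to `Fin (n + 1)`
  let f' : ZMod (n + 1) → V := f
  refine ⟨{p | ∃ i : ZMod (n + 1), p = (f' i, f' (i + 1))},
    ⟨n + 1, f', by omega, hfinj, rfl, ?_⟩, Fin.last n, hlast⟩
  rintro p ⟨i, rfl⟩
  exact hfs i

/-- The arc set `C` can be partitioned into dicycles. -/
def Partitionable (C : Set (V × V)) : Prop := ∃ P, IsDicyclePartition C P

lemma Partitionable.iUnion {ι : Sort*} {E : ι → Set (V × V)}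
    (hE : ∀ i, Partitionable (E i)) (hd : ∀ i j, i ≠ j → Disjoint (E i) (E j)) :
    Partitionable (⋃ i, E i) := by
  choose P hP using hE
  refine ⟨⋃ i, P i, ?_, ?_, ?_⟩
  · intro C hC
    obtain ⟨i, hi⟩ := Set.mem_iUnion.1 hC
    have := (hP i).1 C hi
    exact this.mono (this.subset.trans (Set.subset_iUnion E i))
  · intro C hC C' hC' hne
    obtain ⟨i, hi⟩ := Set.mem_iUnion.1 hC
    obtain ⟨j, hj⟩ := Set.mem_iUnion.1 hC'
    by_cases hij : i = j
    · subst hij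
      exact (hP i).2.1 hi hj hne
    · exact (hd i j hij).mono ((hP i).1 C hi).subset ((hP j).1 C' hj).subset
  · rw [Set.sUnion_iUnion]
    exact Set.iUnion_congr fun i => (hP i).2.2

lemma IsDicycle.partitionable {A C : Set (V × V)} (h : IsDicycle A C) : Partitionable C := by
  refine ⟨{C}, ?_, Set.pairwiseDisjoint_singleton _ _, Set.sUnion_singleton _⟩
  rintro C' rfl
  exact h.mono subset_rfl

lemma partitionable_empty : Partitionable (∅ : Set (V × V)) :=
  ⟨∅, by simp, by simp, by simp⟩

/-! ### Deleting a set of arcs closed under small cuts -/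

/-- The set of end vertices of the arcs in `B`. -/
def endVertices (B : Set (V × V)) : Set V := Prod.fst '' B ∪ Prod.snd '' B

/-- If two end vertices of `B` that are separated by some cut of size at most `ν` are always
separated by a cut contained in `B`, then deleting `B` preserves balancedness.

A cut of `D` larger than `ν` is not affected. For a cut `X` of size at most `ν`, work in one weak
component `K` of `D \ B` at a time. The end vertices of `B` in `K` all lie on the same side
of `X`, since a cut inside `B` cannot be crossed by `K`. So one of `K ∩ X` and `K \ X` meets no arc
of `B`, and balancedness of `D` at this set gives the claim for `K`. -/
lemma IsBalanced.diff_of_closed {D B : Set (V × V)} {ν : Cardinal.{u}} (hD : IsBalanced D)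
    (hν : ℵ₀ ≤ ν) (hBD : B ⊆ D) (hB : #B ≤ ν)
    (hcut : ∀ u ∈ endVertices B, ∀ v ∈ endVertices B, ∀ X : Set V, u ∈ X → v ∉ X →
      #(outArcs D X) ≤ ν → ∃ X' : Set V, u ∈ X' ∧ v ∉ X' ∧ outArcs D X' ∪ inArcs D X' ⊆ B) :
    IsBalanced (D \ B) := by
  intro X
  rcases lt_or_ge ν #(outArcs D X) with hbig | hsmall
  · have h1 := mk_inArcs_add hBD X
    have h2 := mk_outArcs_add hBD X
    have b1 : #(inArcs B X) ≤ ν := (mk_le_mk_of_subset fun e he => he.1).trans hB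
    have b2 : #(outArcs B X) ≤ ν := (mk_le_mk_of_subset fun e he => he.1).trans hB
    rw [add_comm] at h1 h2
    rw [hD X] at h1
    have hinf := hν.trans hbig.le
    rw [Cardinal.eq_of_add_eq_of_aleph0_le h1 (b1.trans_lt hbig) hinf,
      Cardinal.eq_of_add_eq_of_aleph0_le h2 (b2.trans_lt hbig) hinf]
  let r : V → V → Prop := fun a b => (a, b) ∈ D \ B
  have hr : ∀ e ∈ D \ B, Quot.mk r e.1 = Quot.mk r e.2 := fun e he => Quot.sound he
  have hside : ∀ u ∈ endVertices B, ∀ v ∈ endVertices B, Quot.mk r u = Quot.mk r v →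
      u ∈ X → v ∈ X := by
    intro u hu v hv huv huX
    by_contra hvX
    obtain ⟨X', h1, h2, h3⟩ := hcut u hu v hv X huX hvX hsmall
    have hresp : ∀ a b, r a b → (a ∈ X') = (b ∈ X') := by
      rintro a b ⟨habD, habB⟩
      by_contra hne
      apply habB
      by_cases ha : a ∈ X' <;> by_cases hb : b ∈ X'
      · exact absurd (by simp [ha, hb]) hne
      · exact h3 (Or.inl ⟨habD, ha, hb⟩)
      · exact h3 (Or.inr ⟨habD, ha, hb⟩)
      · exact absurd (by simp [ha, hb]) hne
    have : (u ∈ X') = (v ∈ X') := congrArg (Quot.lift (fun w => w ∈ X') hresp) huv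
    exact h2 (this ▸ h1)
  have hb1 : ∀ e ∈ B, e.1 ∈ endVertices B := fun e he => Or.inl ⟨e, he, rfl⟩
  have hb2 : ∀ e ∈ B, e.2 ∈ endVertices B := fun e he => Or.inr ⟨e, he, rfl⟩
  apply mk_eq_of_fibres (fun e => Quot.mk r e.1)
  intro q
  by_cases hq : ∃ w ∈ endVertices B, Quot.mk r w = q ∧ w ∈ X
  · obtain ⟨w, hw, hwq, hwX⟩ := hq
    have hall : ∀ v ∈ endVertices B, Quot.mk r v = q → v ∈ X := fun v hv hvq =>
      hside w hw v hv (hwq.trans hvq.symm) hwX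
    let Y : Set V := {w | Quot.mk r w = q ∧ w ∉ X}
    have e1 : {e | e ∈ inArcs (D \ B) X ∧ Quot.mk r e.1 = q} = outArcs D Y := by
      ext e
      constructor
      · rintro ⟨⟨h1, h2, h3⟩, h4⟩
        exact ⟨h1.1, ⟨h4, h2⟩, fun h => h.2 h3⟩
      · rintro ⟨h1, ⟨h2, h3⟩, h4⟩
        have heB : e ∉ B := fun h => h3 (hall _ (hb1 e h) h2)
        refine ⟨⟨⟨h1, heB⟩, h3, ?_⟩, h2⟩
        by_contra h5
        exact h4 ⟨(hr e ⟨h1, heB⟩).symm.trans h2, h5⟩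
    have e2 : {e | e ∈ outArcs (D \ B) X ∧ Quot.mk r e.1 = q} = inArcs D Y := by
      ext e
      constructor
      · rintro ⟨⟨h1, h2, h3⟩, h4⟩
        exact ⟨h1.1, fun h => h.2 h2, ⟨(hr e h1).symm.trans h4, h3⟩⟩
      · rintro ⟨h1, h4, ⟨h2, h3⟩⟩
        have heB : e ∉ B := fun h => h3 (hall _ (hb2 e h) h2)
        have h5 := (hr e ⟨h1, heB⟩).trans h2
        refine ⟨⟨⟨h1, heB⟩, ?_, h3⟩, h5⟩
        by_contra h6
        exact h4 ⟨h5, h6⟩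
    rw [e1, e2, hD Y]
  · have hall : ∀ v ∈ endVertices B, Quot.mk r v = q → v ∉ X := fun v hv hvq hvX =>
      hq ⟨v, hv, hvq, hvX⟩
    let Y : Set V := {w | Quot.mk r w = q ∧ w ∈ X}
    have e1 : {e | e ∈ inArcs (D \ B) X ∧ Quot.mk r e.1 = q} = inArcs D Y := by
      ext e
      constructor
      · rintro ⟨⟨h1, h2, h3⟩, h4⟩
        exact ⟨h1.1, fun h => h2 h.2, ⟨(hr e h1).symm.trans h4, h3⟩⟩
      · rintro ⟨h1, h4, ⟨h2, h3⟩⟩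
        have heB : e ∉ B := fun h => hall _ (hb2 e h) h2 h3
        have h5 := (hr e ⟨h1, heB⟩).trans h2
        exact ⟨⟨⟨h1, heB⟩, fun h6 => h4 ⟨h5, h6⟩, h3⟩, h5⟩
    have e2 : {e | e ∈ outArcs (D \ B) X ∧ Quot.mk r e.1 = q} = outArcs D Y := by
      ext e
      constructor
      · rintro ⟨⟨h1, h2, h3⟩, h4⟩
        exact ⟨h1.1, ⟨h4, h2⟩, fun h => h3 h.2⟩
      · rintro ⟨h1, ⟨h2, h3⟩, h4⟩
        have heB : e ∉ B := fun h => hall _ (hb1 e h) h2 h3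
        exact ⟨⟨⟨h1, heB⟩, h3, fun h5 => h4 ⟨(hr e ⟨h1, heB⟩).symm.trans h2, h5⟩⟩, h2⟩
    rw [e1, e2, hD Y]

/-! ### Sets of arcs closed under finitary operations -/

/-- `C` is closed, relative to `D`, under the operation `G` assigning a set of arcs to each finite
set of arcs. -/
def FinClosed (D : Set (V × V)) (G : Finset (V × V) → Set (V × V)) (C : Set (V × V)) : Prop :=
  ∀ F : Finset (V × V), (F : Set (V × V)) ⊆ C → G F ∩ D ⊆ C

lemma exists_countable_finClosed (D : Set (V × V)) (G : Finset (V × V) → Set (V × V))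
    (hG : ∀ F, (G F).Countable) : ∃ B ⊆ D, B.Countable ∧ FinClosed D G B := by
  classical
  let step : Set (V × V) → Set (V × V) := fun B =>
    B ∪ ⋃ F ∈ {F : Finset (V × V) | (F : Set (V × V)) ⊆ B}, G F ∩ D
  let S : ℕ → Set (V × V) := fun n => Nat.rec ∅ (fun _ B => step B) n
  have hS : ∀ n, S (n + 1) = step (S n) := fun n => rfl
  have hmono : Monotone S := monotone_nat_of_le_succ fun n => by
    rw [hS]; exact Set.subset_union_left
  have hSD : ∀ n, S n ⊆ D := by
    intro n
    induction n with
    | zero => exact Set.empty_subset _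
    | succ n ih =>
      rw [hS]
      refine Set.union_subset ih (Set.iUnion₂_subset fun F _ => Set.inter_subset_right)
  have hSc : ∀ n, (S n).Countable := by
    intro n
    induction n with
    | zero => exact Set.countable_empty
    | succ n ih =>
      rw [hS]
      refine ih.union (Set.Countable.biUnion ?_ fun F _ => (hG F).mono Set.inter_subset_left)
      have := (Set.countable_ofPred_finite_subset ih).preimage_of_injOn
        (f := fun F : Finset (V × V) => (F : Set (V × V))) Finset.coe_injective.injOn
      refine this.mono fun F hF => ?_
      exact ⟨F.finite_toSet, hF⟩
  refine ⟨⋃ n, S n, Set.iUnion_subset hSD, Set.countable_iUnion hSc, ?_⟩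
  intro F hF
  obtain ⟨n, hn⟩ := hmono.directed_le.exists_mem_subset_of_finset_subset_biUnion hF
  refine Set.Subset.trans ?_ (Set.subset_iUnion S (n + 1))
  rw [hS]
  exact Set.subset_union_of_subset_right (Set.subset_biUnion_of_mem (u := fun F => G F ∩ D) hn) _

lemma Partitionable.union {B C : Set (V × V)} (hB : Partitionable B) (hC : Partitionable C)
    (h : Disjoint B C) : Partitionable (B ∪ C) := by
  rw [Set.union_eq_iUnion]
  refine Partitionable.iUnion ?_ ?_
  · rintro (_ | _)
    · exact hC
    · exact hB
  · rintro (_ | _) (_ | _) hne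
    · exact absurd rfl hne
    · exact h.symm
    · exact h
    · exact absurd rfl hne

/-- Greedy partition of a countable arc set, one dicycle at a time. -/
lemma partitionable_of_extend {B : Set (V × V)} (hB : B.Countable)
    (h : ∀ F : Finset (V × V), (F : Set (V × V)) ⊆ B → Partitionable (F : Set (V × V)) →
      ∀ e ∈ B, e ∉ F → ∃ Z, IsDicycle (B \ F) Z ∧ e ∈ Z) : Partitionable B := by
  classical
  rcases B.eq_empty_or_nonempty with rfl | hne
  · exact partitionable_empty
  obtain ⟨s, hs⟩ := hB.exists_eq_range hne
  let T := {F : Finset (V × V) // (F : Set (V × V)) ⊆ B ∧ Partitionable (F : Set (V × V))}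
  have hstep : ∀ (F : T) (n : ℕ), ∃ F' : T, F.1 ⊆ F'.1 ∧ s n ∈ F'.1 ∧
      Partitionable ((F'.1 : Set (V × V)) \ F.1) := by
    rintro ⟨F, hFB, hFP⟩ n
    have hsn : s n ∈ B := hs ▸ ⟨n, rfl⟩
    by_cases hF : s n ∈ F
    · exact ⟨⟨F, hFB, hFP⟩, subset_rfl, hF, by simpa using partitionable_empty⟩
    · obtain ⟨Z, hZ, hsZ⟩ := h F hFB hFP _ hsn hF
      have hdis : Disjoint (F : Set (V × V)) Z := by
        rw [Set.disjoint_left]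
        intro e h1 h2
        exact (hZ.subset h2).2 h1
      refine ⟨⟨F ∪ hZ.finite.toFinset, ?_, ?_⟩, Finset.subset_union_left, ?_, ?_⟩
      · rw [Finset.coe_union, Set.Finite.coe_toFinset]
        exact Set.union_subset hFB (hZ.subset.trans Set.sdiff_subset)
      · rw [Finset.coe_union, Set.Finite.coe_toFinset]
        exact hFP.union hZ.partitionable hdis
      · simp [hsZ]
      · rw [Finset.coe_union, Set.Finite.coe_toFinset, Set.union_sdiff_cancel_left
          (Set.disjoint_iff.1 hdis)]
        exact hZ.partitionable
  choose next hn1 hn2 hn3 using hstep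
  let S : ℕ → T := fun n => Nat.rec ⟨∅, by simp, by simpa using partitionable_empty⟩
    (fun n F => next F n) n
  have hS : ∀ n, S (n + 1) = next (S n) n := fun n => rfl
  have hS0 : (S 0).1 = ∅ := rfl
  have hmono : Monotone fun n => (S n).1 := monotone_nat_of_le_succ fun n => by
    rw [hS]; exact hn1 _ _
  have hU : B = ⋃ n, (((S (n + 1)).1 : Set (V × V)) \ (S n).1) := by
    ext e
    constructor
    · intro he
      rw [hs] at he
      obtain ⟨n, rfl⟩ := he
      have hex : ∃ k, s n ∈ (S k).1 := ⟨n + 1, by rw [hS]; exact hn2 _ _⟩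
      have h1 := Nat.find_spec hex
      have h2 := fun m => Nat.find_min (m := m) hex
      rcases hk : Nat.find hex with _ | k
      · rw [hk, hS0] at h1
        simp at h1
      · rw [hk] at h1
        exact Set.mem_iUnion.2 ⟨k, h1, h2 k (by omega)⟩
    · intro he
      obtain ⟨n, hn, -⟩ := Set.mem_iUnion.1 he
      exact (S (n + 1)).2.1 hn
  rw [hU]
  refine Partitionable.iUnion (fun n => by rw [hS]; exact hn3 _ _) ?_
  have hlt : ∀ i j, i < j → Disjoint (((S (i + 1)).1 : Set (V × V)) \ (S i).1)
      (((S (j + 1)).1 : Set (V × V)) \ (S j).1) := by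
    intro i j hij
    rw [Set.disjoint_left]
    rintro e ⟨h1, -⟩ ⟨-, h2⟩
    exact h2 (hmono (show i + 1 ≤ j from hij) h1)
  intro i j hij
  rcases lt_or_gt_of_ne hij with h | h
  · exact hlt i j h
  · exact (hlt j i h).symm

/-- The countable case: close also under the operation that picks, for a finite set `F'` of arcs and
an arc `e`, a dicycle through `e` avoiding `F'`. -/
lemma exists_partitionable_countable {D : Set (V × V)} (hl : ∀ e ∈ D, e.1 ≠ e.2)
    (hD : IsBalanced D) (G : Finset (V × V) → Set (V × V)) (hG : ∀ F, (G F).Countable) :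
    ∃ C ⊆ D, C.Countable ∧ Partitionable C ∧ FinClosed D G C := by
  classical
  have hex : ∀ (F' : Finset (V × V)) (e : V × V), ∃ Z : Set (V × V), Z.Finite ∧
      ((∃ C, IsDicycle (D \ F') C ∧ e ∈ C) → IsDicycle (D \ F') Z ∧ e ∈ Z) := by
    intro F' e
    by_cases h : ∃ C, IsDicycle (D \ F') C ∧ e ∈ C
    · obtain ⟨C, hC⟩ := h
      exact ⟨C, hC.1.finite, fun _ => hC⟩
    · exact ⟨∅, Set.finite_empty, fun h' => absurd h' h⟩
  choose cyc hfin hcyc using hex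
  obtain ⟨B, hBD, hBc, hB⟩ := exists_countable_finClosed D
    (fun F => G F ∪ ⋃ F' ∈ F.powerset, ⋃ e ∈ F, cyc F' e) (by
      intro F
      refine (hG F).union (Set.Finite.countable ?_)
      exact Set.Finite.biUnion (Finset.finite_toSet _) fun F' _ =>
        Set.Finite.biUnion (Finset.finite_toSet _) fun e _ => hfin F' e)
  refine ⟨B, hBD, hBc, ?_, fun F hF y hy => hB F hF ⟨Or.inl hy.1, hy.2⟩⟩
  refine partitionable_of_extend hBc ?_
  intro F hF hFP e he heF
  obtain ⟨P, hP⟩ := hFP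
  have hbal : IsBalanced (D \ F) :=
    hD.diff_finite hP.balanced (hF.trans hBD) F.finite_toSet
  obtain ⟨h1, h2⟩ := hcyc F e (hbal.exists_dicycle ⟨hBD he, heF⟩ (hl e (hBD he)))
  refine ⟨cyc F e, h1.mono ?_, h2⟩
  intro y hy
  refine ⟨hB (insert e F) ?_ ⟨Or.inr ?_, (h1.subset hy).1⟩, (h1.subset hy).2⟩
  · rw [Finset.coe_insert]
    exact Set.insert_subset he hF
  · simp only [Set.mem_iUnion]
    exact ⟨F, by simp, e, by simp, hy⟩

/-! ### The transfinite construction -/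

lemma mk_iUnion_le_of_le {α ι : Type u} {c : Cardinal.{u}} (hc : ℵ₀ ≤ c) (hι : #ι ≤ c)
    {f : ι → Set α} (hf : ∀ i, #(f i) ≤ c) : #(⋃ i, f i) ≤ c :=
  (mk_iUnion_le f).trans ((mul_le_mul' hι (ciSup_le' hf)).trans (mul_eq_self hc).le)

lemma mk_finset_subset_le {α : Type u} (C : Set α) {c : Cardinal.{u}} (hc : ℵ₀ ≤ c) (hC : #C ≤ c) :
    #{F : Finset α // (F : Set α) ⊆ C} ≤ c := by
  classical
  have h1 : #{F : Finset α // (F : Set α) ⊆ C} ≤ #(Finset C) := by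
    refine mk_le_of_surjective (f := fun F : Finset C =>
      ⟨F.map (Function.Embedding.subtype _), by simp⟩) ?_
    rintro ⟨F, hF⟩
    refine ⟨F.subtype (· ∈ C), Subtype.ext ?_⟩
    exact Finset.subtype_map_of_mem hF
  refine h1.trans ?_
  rcases finite_or_infinite C with h | h
  · exact (mk_le_aleph0 (α := Finset C)).trans hc
  · rw [mk_finset_of_infinite]; exact hC

/-- Every set `Y` has a filtration, indexed by ordinals `o`, by subsets of size at most
`max ℵ₀ |o|`, which exhausts `Y` as soon as `max ℵ₀ |o|` reaches the cardinality of `Y`. -/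
lemma exists_rank {α : Type u} (Y : Set α) : ∃ r : α → Ordinal.{u},
    (∀ o : Ordinal.{u}, #{y | y ∈ Y ∧ r y < o} ≤ max ℵ₀ o.card) ∧
    ∀ o : Ordinal.{u}, 0 < o → #Y ≤ max ℵ₀ o.card → ∀ y ∈ Y, r y < o := by
  classical
  by_cases hY : #Y ≤ ℵ₀
  · refine ⟨fun _ => 0, fun o => ?_, fun o ho _ y _ => ho⟩
    exact ((mk_le_mk_of_subset fun y hy => hy.1).trans hY).trans (le_max_left _ _)
  obtain ⟨s, hs, hso⟩ := Cardinal.exists_ord_eq Y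
  refine ⟨fun y => if h : y ∈ Y then Ordinal.typein s ⟨y, h⟩ else 0,
    fun o => ?_, fun o _ ho y hy => ?_⟩
  · have : {y | y ∈ Y ∧ (if h : y ∈ Y then Ordinal.typein s ⟨y, h⟩ else 0) < o}
        = ⋃ j < o, {y | ∃ h : y ∈ Y, Ordinal.typein s ⟨y, h⟩ = j} := by
      ext y
      simp only [Set.mem_ofPred_eq, Set.mem_iUnion]
      constructor
      · rintro ⟨h1, h2⟩
        rw [dif_pos h1] at h2
        exact ⟨_, h2, h1, rfl⟩
      · rintro ⟨j, h1, h2, rfl⟩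
        refine ⟨h2, ?_⟩
        rwa [dif_pos h2]
    rw [this]
    refine mk_biUnion_le_of_le (le_max_right _ _) (le_max_left _ _) _ fun j _ => ?_
    refine (mk_le_one_iff_set_subsingleton.2 ?_).trans (one_le_aleph0.trans (le_max_left _ _))
    rintro y ⟨h1, h2⟩ y' ⟨h1', h2'⟩
    exact congrArg Subtype.val (Ordinal.typein_injective s (h2.trans h2'.symm))
  · simp only [dif_pos hy]
    refine (Ordinal.typein_lt_type s _).trans_le ?_
    rw [← hso, ord_le]
    rcases le_max_iff.1 ho with h | h
    · exact absurd h hY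
    · exact h

/-- For two vertices `u`, `v`, the arcs crossing a separating vertex set with as few outgoing arcs
as possible (in either direction; these are equally many). -/
lemma exists_min_cut {D : Set (V × V)} (hD : IsBalanced D) (u v : V) :
    ∃ Y : Set (V × V), ∀ ν : Cardinal.{u}, ℵ₀ ≤ ν → ∀ X : Set V, u ∈ X → v ∉ X →
      #(outArcs D X) ≤ ν → #Y ≤ ν ∧ ∃ X' : Set V, u ∈ X' ∧ v ∉ X' ∧
        outArcs D X' ∪ inArcs D X' = Y := by
  by_cases h : ({X : Set V | u ∈ X ∧ v ∉ X}).Nonempty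
  · let f : Set V → Cardinal.{u} := fun X => #(outArcs D X)
    let X₀ := Function.argminOn f {X : Set V | u ∈ X ∧ v ∉ X} h
    have hX₀ : u ∈ X₀ ∧ v ∉ X₀ := Function.argminOn_mem f _ h
    refine ⟨outArcs D X₀ ∪ inArcs D X₀, fun ν hν X hu hv hX => ⟨?_, X₀, hX₀.1, hX₀.2, rfl⟩⟩
    have hle : #(outArcs D X₀) ≤ ν :=
      (Function.argminOn_le f {X : Set V | u ∈ X ∧ v ∉ X} (a := X) ⟨hu, hv⟩).trans hX
    refine (mk_union_le _ _).trans ?_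
    rw [hD X₀]
    exact add_le_of_le hν hle hle
  · exact ⟨∅, fun ν _ X hu hv _ => absurd ⟨X, hu, hv⟩ h⟩

/-- The inductive core: a balanced digraph has partitionable arc sets of size at most `μ` that are
closed under any prescribed finitary operation with values of size at most `μ`.

For uncountable `μ` such a set is the union of disjoint pieces `E k`, `k < μ.ord`, where `E k` comes
from the induction hypothesis for `max ℵ₀ |k|` in the digraph left after deleting all earlier
pieces. The pieces are chosen so that every initial union `C o` is closed under the first `o` of the
demands (elements of `G F` and of minimal cuts between end vertices of `F`); in particular small
cuts between end vertices of `C o` lie in `C o`, so the digraph left at each stage is balanced. -/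
theorem exists_partitionable_finClosed (μ : Cardinal.{u}) (hμ : ℵ₀ ≤ μ) (D : Set (V × V))
    (hl : ∀ e ∈ D, e.1 ≠ e.2) (hD : IsBalanced D) (G : Finset (V × V) → Set (V × V))
    (hG : ∀ F, #(G F) ≤ μ) :
    ∃ C ⊆ D, #C ≤ μ ∧ Partitionable C ∧ FinClosed D G C := by
  classical
  induction μ using WellFoundedLT.induction generalizing D G with
  | ind μ ih =>
  rcases hμ.eq_or_lt with rfl | hμ'
  · obtain ⟨C, h1, h2, h3⟩ := exists_partitionable_countable hl hD G
      fun F => le_aleph0_iff_set_countable.1 (hG F)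
    exact ⟨C, h1, le_aleph0_iff_set_countable.2 h2, h3⟩
  choose r hr1 hr2 using fun Y : Set (V × V) => exists_rank Y
  choose Y hY using fun u v => exists_min_cut hD u v
  -- the sets demanded by `F`
  let H : Finset (V × V) → Set (Set (V × V)) := fun F =>
    {G F} ∪ (fun p : V × V => Y p.1 p.2) '' (endVertices F ×ˢ endVertices F)
  have hHfin : ∀ F, (H F).Finite := by
    intro F
    have : (endVertices (F : Set (V × V))).Finite :=
      (F.finite_toSet.image _).union (F.finite_toSet.image _)
    exact (Set.finite_singleton _).union ((this.prod this).image _)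
  -- the part of these demands that stage `m` has to meet
  let L : Finset (V × V) → Ordinal.{u} → Set (V × V) := fun F m =>
    ⋃ Z : H F, {y | y ∈ Z.1 ∧ r Z.1 y < m + 1}
  have hLmem : ∀ F m y, y ∈ L F m ↔ ∃ Z ∈ H F, y ∈ Z ∧ r Z y ≤ m := by
    intro F m y
    simp only [L, Set.mem_iUnion, Set.mem_ofPred_eq, Order.lt_add_one_iff, Subtype.exists, exists_prop]
  have hLmono : ∀ F {m m'}, m ≤ m' → L F m ⊆ L F m' := by
    intro F m m' h y hy
    rw [hLmem] at hy ⊢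
    obtain ⟨Z, h1, h2, h3⟩ := hy
    exact ⟨Z, h1, h2, h3.trans h⟩
  have hLcard : ∀ F m, #(L F m) ≤ max ℵ₀ m.card := by
    intro F m
    refine mk_iUnion_le_of_le (le_max_left _ _) ?_ fun Z => (hr1 Z.1 _).trans ?_
    · exact (le_aleph0_iff_set_countable.2 (hHfin F).countable).trans (le_max_left _ _)
    · refine max_le (le_max_left _ _) ?_
      rw [Ordinal.card_add_one]
      exact add_le_of_le (le_max_left _ _) (le_max_right _ _)
        (one_le_aleph0.trans (le_max_left _ _))
  let Good : Ordinal.{u} → Set (V × V) → Set (V × V) → Prop := fun m B C =>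
    C ⊆ D \ B ∧ #C ≤ max ℵ₀ m.card ∧ Partitionable C ∧
      ∀ F : Finset (V × V), (F : Set (V × V)) ⊆ B ∪ C → L F m ∩ D ⊆ B ∪ C
  let pick : Ordinal.{u} → Set (V × V) → Set (V × V) := fun m B =>
    if h : ∃ C, Good m B C then h.choose else ∅
  have hpick : ∀ m B, (∃ C, Good m B C) → Good m B (pick m B) := by
    intro m B h
    simp only [pick, dif_pos h]
    exact h.choose_spec
  let E : Ordinal.{u} → Set (V × V) :=
    WellFounded.fix (r := (· < ·)) wellFounded_lt fun m E => pick m (⋃ k, ⋃ h : k < m, E k h)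
  let C : Ordinal.{u} → Set (V × V) := fun m => ⋃ k < m, E k
  have hE : ∀ m, E m = pick m (C m) := by
    intro m
    exact WellFounded.fix_eq (r := (· < ·)) wellFounded_lt
      (fun m E => pick m (⋃ k, ⋃ h : k < m, E k h)) m
  have hCmem : ∀ o y, y ∈ C o ↔ ∃ k < o, y ∈ E k := by
    intro o y
    simp only [C, Set.mem_iUnion, exists_prop]
  have hCE : ∀ {k o}, k < o → C k ∪ E k ⊆ C o := by
    intro k o hk y hy
    rw [hCmem]
    rcases hy with hy | hy
    · obtain ⟨j, hj, hy⟩ := (hCmem _ _).1 hy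
      exact ⟨j, hj.trans hk, hy⟩
    · exact ⟨k, hk, hy⟩
  have hCE' : ∀ {k m}, k ≤ m → E k ⊆ C m ∪ E m := by
    intro k m hk
    rcases hk.eq_or_lt with rfl | h
    · exact Set.subset_union_right
    · exact fun y hy => Or.inl ((hCmem _ _).2 ⟨k, h, hy⟩)
  have hsubD : ∀ o, (∀ k < o, Good k (C k) (E k)) → C o ⊆ D := by
    intro o ho y hy
    obtain ⟨k, hk, hy⟩ := (hCmem _ _).1 hy
    exact ((ho k hk).1 hy).1
  have hcard : ∀ o, (∀ k < o, Good k (C k) (E k)) → #(C o) ≤ max ℵ₀ o.card := by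
    intro o ho
    refine mk_biUnion_le_of_le (le_max_right _ _) (le_max_left _ _) _ fun k hk => ?_
    exact (ho k hk).2.1.trans (max_le_max le_rfl (Ordinal.card_le_card hk.le))
  have hclosed : ∀ o, (∀ k < o, Good k (C k) (E k)) → ∀ F : Finset (V × V),
      (F : Set (V × V)) ⊆ C o → ∀ j < o, L F j ∩ D ⊆ C o := by
    intro o ho F hF j hj
    -- a single stage before `o` sees all of `F` and the index `j`
    have hex : ∃ m < o, j ≤ m ∧ (F : Set (V × V)) ⊆ C m ∪ E m := by
      induction F using Finset.induction_on with
      | empty => exact ⟨j, hj, le_rfl, by simp⟩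
      | insert e F _ ihF =>
        rw [Finset.coe_insert, Set.insert_subset_iff] at hF
        obtain ⟨m, hm, hjm, hFm⟩ := ihF hF.2
        obtain ⟨k, hk, hek⟩ := (hCmem _ _).1 hF.1
        refine ⟨max m k, max_lt hm hk, hjm.trans (le_max_left _ _), ?_⟩
        rw [Finset.coe_insert, Set.insert_subset_iff]
        refine ⟨hCE' (le_max_right _ _) hek, fun y hy => ?_⟩
        rcases hFm hy with h | h
        · obtain ⟨i, hi, hyi⟩ := (hCmem _ _).1 h
          exact hCE' (hi.le.trans (le_max_left _ _)) hyi
        · exact hCE' (le_max_left _ _) h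
    obtain ⟨m, hm, hjm, hFm⟩ := hex
    intro y hy
    exact hCE hm ((ho m hm).2.2.2 F hFm ⟨hLmono F hjm hy.1, hy.2⟩)
  have hmeet : ∀ o, (∀ k < o, Good k (C k) (E k)) → 0 < o → ∀ F : Finset (V × V),
      (F : Set (V × V)) ⊆ C o → ∀ Z ∈ H F, #Z ≤ max ℵ₀ o.card → Z ∩ D ⊆ C o := by
    intro o ho hpos F hF Z hZ hZc y hy
    exact hclosed o ho F hF (r Z y) (hr2 Z o hpos hZc y hy.1)
      ⟨(hLmem _ _ _).2 ⟨Z, hZ, hy.1, le_rfl⟩, hy.2⟩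
  have hbal : ∀ o, (∀ k < o, Good k (C k) (E k)) → IsBalanced (D \ C o) := by
    intro o ho
    rcases eq_zero_or_pos o with rfl | hpos
    · have : C 0 = ∅ := by
        ext y
        rw [hCmem]
        simp
      rw [this, Set.sdiff_empty]
      exact hD
    refine hD.diff_of_closed (le_max_left ℵ₀ o.card) (hsubD o ho) (hcard o ho) ?_
    intro u hu v hv X huX hvX hX
    obtain ⟨hYc, X', h1, h2, h3⟩ := hY u v _ (le_max_left _ _) X huX hvX hX
    refine ⟨X', h1, h2, ?_⟩
    have hend : ∀ w ∈ endVertices (C o), ∃ e ∈ C o, w = e.1 ∨ w = e.2 := by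
      rintro w (⟨e, he, rfl⟩ | ⟨e, he, rfl⟩)
      · exact ⟨e, he, Or.inl rfl⟩
      · exact ⟨e, he, Or.inr rfl⟩
    have hend' : ∀ (F : Finset (V × V)) (w : V) (e : V × V), e ∈ F → (w = e.1 ∨ w = e.2) →
        w ∈ endVertices (F : Set (V × V)) := by
      rintro F w e he (rfl | rfl)
      · exact Or.inl ⟨e, he, rfl⟩
      · exact Or.inr ⟨e, he, rfl⟩
    obtain ⟨e, he, hue⟩ := hend u hu
    obtain ⟨f, hf, hvf⟩ := hend v hv
    have hYC := hmeet o ho hpos {e, f} (by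
      rw [Finset.coe_insert, Finset.coe_singleton]
      exact Set.insert_subset he (Set.singleton_subset_iff.2 hf)) (Y u v)
      (Or.inr ⟨(u, v), ⟨hend' _ u e (by simp) hue, hend' _ v f (by simp) hvf⟩, rfl⟩) hYc
    intro y hy
    refine hYC ⟨h3 ▸ hy, ?_⟩
    rcases hy with hy | hy
    · exact hy.1
    · exact hy.1
  have hgood : ∀ m, m < μ.ord → Good m (C m) (E m) := by
    intro m
    induction m using WellFoundedLT.induction with
    | ind m ihm =>
    intro hm
    have ho : ∀ k < m, Good k (C k) (E k) := fun k hk => ihm k hk (hk.trans hm)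
    rw [hE]
    apply hpick
    have hlt : max ℵ₀ m.card < μ := max_lt hμ' (lt_ord.1 hm)
    obtain ⟨K, hK1, hK2, hK3, hK4⟩ := ih (max ℵ₀ m.card) hlt (le_max_left _ _) (D \ C m)
      (fun e he => hl e he.1) (hbal m ho)
      (fun F => ⋃ F' : {F' : Finset (V × V) // (F' : Set (V × V)) ⊆ C m}, L (F ∪ F'.1) m)
      (fun F => mk_iUnion_le_of_le (le_max_left _ _)
        (mk_finset_subset_le _ (le_max_left _ _) (hcard m ho)) fun F' => hLcard _ _)
    refine ⟨K, hK1, hK2, hK3, ?_⟩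
    intro F hF y hy
    by_cases hyC : y ∈ C m
    · exact Or.inl hyC
    right
    refine hK4 (F.filter (· ∈ K)) (by intro e he; simpa using (Finset.mem_filter.1 he).2)
      ⟨Set.mem_iUnion.2 ⟨⟨F.filter (· ∈ C m), ?_⟩, ?_⟩, hy.2, hyC⟩
    · intro e he
      exact (Finset.mem_filter.1 he).2
    · have : F.filter (· ∈ K) ∪ F.filter (· ∈ C m) = F := by
        rw [← Finset.filter_or, Finset.filter_eq_self]
        intro e he
        exact (hF he).symm
      rw [this]
      exact hy.1
  have hμord : max ℵ₀ μ.ord.card = μ := by rw [card_ord, max_eq_right hμ]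
  refine ⟨C μ.ord, hsubD _ hgood, (hcard _ hgood).trans hμord.le, ?_, ?_⟩
  · refine Partitionable.iUnion (fun k => ?_) ?_
    · by_cases hk : k < μ.ord
      · simpa [hk] using (hgood k hk).2.2.1
      · simpa [hk] using partitionable_empty
    · have hdis : ∀ i j, i < j →
          Disjoint (⋃ (_ : i < μ.ord), E i) (⋃ (_ : j < μ.ord), E j) := by
        intro i j hij
        rw [Set.disjoint_left]
        intro y hi hj
        simp only [Set.mem_iUnion, exists_prop] at hi hj
        exact ((hgood j hj.1).1 hj.2).2 ((hCmem _ _).2 ⟨i, hij, hi.2⟩)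
      intro i j hij
      rcases lt_or_gt_of_ne hij with h | h
      · exact hdis i j h
      · exact (hdis j i h).symm
  · intro F hF
    refine hmeet _ hgood ?_ F hF (G F) (Or.inl rfl) ((hG F).trans hμord.ge)
    rw [lt_ord, Ordinal.card_zero]
    exact aleph0_pos.trans_le hμ

end DicyclePartition

/-- **Thomassen's conjecture / Nash-Williams' theorem for digraphs.**
The arc set of a loop-free digraph can be partitioned into dicycles if and only if
the digraph is balanced. -/
theorem arcs_partition_into_dicycles_iff_balanced {V : Type*} (A : Set (V × V))
    (hA : ∀ e ∈ A, e.1 ≠ e.2) :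
    (∃ P : Set (Set (V × V)), IsDicyclePartition A P) ↔ IsBalanced A := by
  constructor
  · rintro ⟨P, hP⟩
    exact hP.balanced
  · intro hbal
    -- the only subset of `A` closed under the constant operation `A` is `A` itself
    obtain ⟨C, hCA, -, hP, hC⟩ := exists_partitionable_finClosed
      (max Cardinal.aleph0 (Cardinal.mk A)) (le_max_left _ _) A hA hbal (fun _ => A)
      (fun _ => le_max_right _ _)
    have hAC : A ⊆ C := by simpa using hC ∅ (by simp)
    rwa [hCA.antisymm hAC] at hP
end

section
/- Let G be a simple undirected graph on a vertex type V. Then the edge set of G can be partitioned into (edge sets of) cycles if and only if for every subset X ⊆ V the set of edges of G with exactly one endpoint in X is either infinite or has an even (finite) number of elements. -/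
/-!
Call an edge set *even* if all its finite cuts are even. A cycle meets every cut in an even number
of edges, so a union of disjoint cycles is even; this is the easy direction.

For the converse, an even edge set has no bridge, so each of its edges lies on a cycle, and removing
a cycle leaves an even set. A countable even set is therefore decomposed by removing cycles one by
one along an enumeration of its edges.

An uncountable even set `E` is treated by induction on its cardinality: it is cut into pieces
that are even and of smaller cardinality. For this, `E` is exhausted by a transfinite increasing
sequence of sets `M α`, with `#(M α) ≤ max ℵ₀ |α|`, and the pieces are `M α \ N α` with
`N α = ⋃ β < α, M β`. Two facts make the pieces even.

* `EvenCuts.sdiff`: `E \ N` is even if any two vertices of `N` that are connected in `E \ N` cannot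
  be separated there by finitely many edges. To ensure this for `N = N α`, fix for any two vertices
  `x`, `y` a separating set of minimum cardinality, enumerated along its initial ordinal, and let
  `M α` contain, for any two of its vertices, the members of their separator with index below `ω`
  or at most `α`. If finitely many edges separate `x` and `y` in `E \ N α`, these edges together
  with `N α` separate them in `E`, so the chosen separator has size at most `max ℵ₀ |α|` and lies
  entirely in `N α`; hence `x` and `y` are not connected in `E \ N α` at all.

* `EvenCuts.of_reflects`: a subset of an even set is even if it reflects connectivity
  between its vertices after deletion of finitely many of its edges. Closing off under a choice of
  walks ensures this for `M α \ N α` inside `E \ N α`.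
-/

/-- `C` is the edge set of a cycle of the simple graph `G`. -/
def IsCycleEdgeSet {V : Type*} (G : SimpleGraph V) (C : Set (Sym2 V)) : Prop :=
  ∃ (v : V) (w : G.Walk v v), w.IsCycle ∧ C = {e | e ∈ w.edges}

/-- The cut determined by a vertex set `X`: the edges of `G` with exactly one
endpoint in `X`. -/
def cutEdges {V : Type*} (G : SimpleGraph V) (X : Set V) : Set (Sym2 V) :=
  {e ∈ G.edgeSet | ∃ u v, e = s(u, v) ∧ u ∈ X ∧ v ∉ X}

namespace NashWilliams

open Cardinal Set

universe u

variable {V : Type u}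

/-! ### Cuts and connectivity of edge sets -/

/-- The edges of `S` with exactly one endpoint in `X`. -/
def cut (S : Set (Sym2 V)) (X : Set V) : Set (Sym2 V) :=
  {e ∈ S | ∃ u v, e = s(u, v) ∧ u ∈ X ∧ v ∉ X}

/-- Every finite cut of `S` is even. -/
def EvenCuts (S : Set (Sym2 V)) : Prop :=
  ∀ X : Set V, (cut S X).Finite → Even (cut S X).ncard

/-- `x` and `y` are joined by a walk all of whose edges lie in `S`. -/
def Conn (S : Set (Sym2 V)) (x y : V) : Prop :=
  Relation.ReflTransGen (fun u v => s(u, v) ∈ S) x y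

/-- The vertices covered by the edges of `S`. -/
def verts (S : Set (Sym2 V)) : Set V := {v | ∃ e ∈ S, v ∈ e}

/-- `S` can be partitioned into cycles of `G`. -/
def Decomposes (G : SimpleGraph V) (S : Set (Sym2 V)) : Prop :=
  ∃ P : Set (Set (Sym2 V)), (∀ C ∈ P, IsCycleEdgeSet G C) ∧ P.PairwiseDisjoint id ∧ ⋃₀ P = S

lemma mem_cut {S : Set (Sym2 V)} {X : Set V} {a b : V} :
    s(a, b) ∈ cut S X ↔ s(a, b) ∈ S ∧ ¬ (a ∈ X ↔ b ∈ X) := by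
  constructor
  · rintro ⟨h, p, q, hpq, hp, hq⟩
    refine ⟨h, ?_⟩
    rcases Sym2.eq_iff.1 hpq with ⟨rfl, rfl⟩ | ⟨rfl, rfl⟩ <;> tauto
  · rintro ⟨h, hab⟩
    by_cases ha : a ∈ X
    · exact ⟨h, a, b, rfl, ha, by tauto⟩
    · exact ⟨h, b, a, Sym2.eq_swap, by tauto, ha⟩

lemma verts_mono {S T : Set (Sym2 V)} (h : S ⊆ T) : verts S ⊆ verts T :=
  fun _ ⟨e, he, hv⟩ => ⟨e, h he, hv⟩

lemma left_mem_verts {S : Set (Sym2 V)} {a b : V} (h : s(a, b) ∈ S) : a ∈ verts S :=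
  ⟨_, h, Sym2.mem_mk_left a b⟩

lemma right_mem_verts {S : Set (Sym2 V)} {a b : V} (h : s(a, b) ∈ S) : b ∈ verts S :=
  ⟨_, h, Sym2.mem_mk_right a b⟩

lemma Conn.mono {S T : Set (Sym2 V)} (h : S ⊆ T) {x y : V} (hc : Conn S x y) : Conn T x y :=
  Relation.ReflTransGen.mono (fun _ _ hab => h hab) _ _ hc

lemma Conn.trans {S : Set (Sym2 V)} {x y z : V} (h : Conn S x y) (h' : Conn S y z) :
    Conn S x z := Relation.ReflTransGen.trans h h'

lemma Conn.step {S : Set (Sym2 V)} {x y z : V} (h : Conn S x y) (h' : s(y, z) ∈ S) :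
    Conn S x z := Relation.ReflTransGen.tail h h'

lemma Conn.step_iff {S : Set (Sym2 V)} {x y z : V} (h : s(y, z) ∈ S) :
    Conn S x y ↔ Conn S x z :=
  ⟨fun h' => h'.step h, fun h' => h'.step (Sym2.eq_swap ▸ h)⟩

/-- A walk avoiding the cut of `X` stays on one side of `X`. -/
lemma Conn.side {S : Set (Sym2 V)} {X : Set V} {x y : V} (h : Conn (S \ cut S X) x y) :
    x ∈ X ↔ y ∈ X := by
  induction h with
  | refl => rfl
  | tail _ h ih =>
    rw [ih]
    by_contra hne
    exact h.2 (mem_cut.2 ⟨h.1, hne⟩)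

/-- Walks are finite. -/
lemma Conn.exists_finite {S : Set (Sym2 V)} {x y : V} (h : Conn S x y) :
    ∃ P : Set (Sym2 V), P.Finite ∧ P ⊆ S ∧ Conn P x y := by
  induction h with
  | refl => exact ⟨∅, finite_empty, empty_subset _, .refl⟩
  | @tail b c _ h ih =>
    obtain ⟨P, hP, hPS, hc⟩ := ih
    exact ⟨insert s(b, c) P, hP.insert _, insert_subset h hPS,
      (hc.mono (subset_insert _ _)).step (mem_insert _ _)⟩

/-! ### Cycles and cuts -/

open Classical in
lemma walk_parity {G : SimpleGraph V} (X : Set V) {a b : V} (w : G.Walk a b) :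
    Even (w.edges.countP (fun e => e ∈ cut univ X)) ↔ (a ∈ X ↔ b ∈ X) := by
  induction w with
  | nil => simp
  | @cons p q r h w ih =>
    rw [SimpleGraph.Walk.edges_cons, List.countP_cons]
    have := @mem_cut V univ X p q
    by_cases hc : s(p, q) ∈ cut univ X
    · simp only [hc, decide_true, if_true, Nat.even_add_one, ih]
      simp only [mem_univ, true_and] at this
      tauto
    · simp only [hc, decide_false, Bool.false_eq_true, if_false, add_zero, ih]
      simp only [mem_univ, true_and] at this
      tauto

lemma IsCycleEdgeSet.finite {G : SimpleGraph V} {C : Set (Sym2 V)} (hC : IsCycleEdgeSet G C) :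
    C.Finite := by
  obtain ⟨v, w, -, rfl⟩ := hC
  exact w.edges.finite_toSet

lemma IsCycleEdgeSet.evenCuts {G : SimpleGraph V} {C : Set (Sym2 V)} (hC : IsCycleEdgeSet G C) :
    EvenCuts C := by
  classical
  intro X _
  obtain ⟨v, w, hw, rfl⟩ := hC
  have h := (walk_parity X w).2 Iff.rfl
  have hnd : w.edges.Nodup := hw.isCircuit.isTrail.edges_nodup
  rw [List.countP_eq_length_filter, ← List.toFinset_card_of_nodup (hnd.filter _),
    ← Set.ncard_coe_finset] at h
  convert h using 2
  ext e
  simp [cut]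

lemma EvenCuts.sdiff_cycle {G : SimpleGraph V} {R C : Set (Sym2 V)} (hR : EvenCuts R)
    (hC : IsCycleEdgeSet G C) (hCR : C ⊆ R) : EvenCuts (R \ C) := by
  intro X hX
  have hCX : (cut C X).Finite := (IsCycleEdgeSet.finite hC).subset fun e he => he.1
  have hun : cut R X = cut (R \ C) X ∪ cut C X := by
    ext e
    by_cases he : e ∈ C
    · simp [cut, he, hCR he]
    · simp [cut, he]
  have hdis : Disjoint (cut (R \ C) X) (cut C X) :=
    Set.disjoint_left.2 fun e he he' => he.1.2 he'.1
  have h := hR X (hun ▸ hX.union hCX)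
  rw [hun, ncard_union_eq hdis hX hCX, Nat.even_add] at h
  exact h.2 (IsCycleEdgeSet.evenCuts hC X hCX)

/-- An edge set with only even finite cuts has no bridge, so each edge lies on a cycle. -/
lemma EvenCuts.exists_cycle {G : SimpleGraph V} {R : Set (Sym2 V)} (hR : EvenCuts R)
    (hRG : R ⊆ G.edgeSet) {e : Sym2 V} (he : e ∈ R) :
    ∃ C, IsCycleEdgeSet G C ∧ C ⊆ R ∧ e ∈ C := by
  induction e with | h x y
  have hxy : G.Adj x y := hRG he
  have hconn : Conn (R \ {s(x, y)}) x y := by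
    by_contra hcon
    have hcut : cut R {v | Conn (R \ {s(x, y)}) x v} = {s(x, y)} := by
      ext f
      induction f with | h a b
      rw [mem_cut, mem_singleton_iff]
      constructor
      · rintro ⟨hf, hab⟩
        by_contra hne
        exact hab (Conn.step_iff ⟨hf, hne⟩)
      · intro hf
        rw [hf]
        refine ⟨he, ?_⟩
        have hx : Conn (R \ {s(x, y)}) x x := .refl
        rcases Sym2.eq_iff.1 hf with ⟨rfl, rfl⟩ | ⟨rfl, rfl⟩ <;>
          simp only [mem_ofPred_eq] <;> tauto
    have := hR {v | Conn (R \ {s(x, y)}) x v} (by rw [hcut]; exact finite_singleton _)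
    rw [hcut, ncard_singleton] at this
    exact absurd this (by decide)
  set H := SimpleGraph.fromEdgeSet R with hH
  have hHG : H ≤ G := by
    intro a b hab
    exact hRG ((SimpleGraph.fromEdgeSet_adj _).1 hab).1
  have hbr : ¬ H.IsBridge s(x, y) := by
    rw [SimpleGraph.isBridge_iff, not_not, SimpleGraph.reachable_iff_reflTransGen]
    refine Relation.ReflTransGen.mono ?_ _ _ hconn
    intro a b hab
    rw [SimpleGraph.deleteEdges_adj, SimpleGraph.fromEdgeSet_adj]
    exact ⟨⟨hab.1, (hRG hab.1 : G.Adj a b).ne⟩, hab.2⟩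
  have heH : s(x, y) ∈ H.edgeSet := (SimpleGraph.fromEdgeSet_adj _).2 ⟨he, hxy.ne⟩
  rw [SimpleGraph.isBridge_iff_forall_cycle_notMem heH] at hbr
  push Not at hbr
  obtain ⟨z, p, hp, hep⟩ := hbr
  refine ⟨{e | e ∈ p.edges}, ⟨z, p.mapLe hHG, hp.mapLe hHG, ?_⟩, ?_, hep⟩
  · rw [SimpleGraph.Walk.edges_mapLe_eq_edges]
  · intro f hf
    have := p.edges_subset_edgeSet hf
    rw [hH, SimpleGraph.edgeSet_fromEdgeSet] at this
    exact this.1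

/-- If `S` is partitioned into cycles, a finite cut of `S` is partitioned into
the cuts of these cycles, each of which is even. -/
lemma Decomposes.evenCuts {G : SimpleGraph V} {S : Set (Sym2 V)} (h : Decomposes G S) :
    EvenCuts S := by
  classical
  obtain ⟨P, hP, hd, rfl⟩ := h
  intro X hX
  have hex : ∀ e : Sym2 V, ∃ C, e ∈ cut (⋃₀ P) X → C ∈ P ∧ e ∈ C := by
    intro e
    by_cases he : e ∈ cut (⋃₀ P) X
    · obtain ⟨C, hC, heC⟩ := he.1
      exact ⟨C, fun _ => ⟨hC, heC⟩⟩
    · exact ⟨∅, fun h => absurd h he⟩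
  choose f hf using hex
  rw [ncard_eq_toFinset_card _ hX, Finset.card_eq_sum_card_image f]
  refine Finset.even_sum _ fun C hC => ?_
  obtain ⟨e, he, rfl⟩ := Finset.mem_image.1 hC
  have hfe := hf e (by simpa using he)
  have hev := IsCycleEdgeSet.evenCuts (hP _ hfe.1) X
    ((IsCycleEdgeSet.finite (hP _ hfe.1)).subset fun e he => he.1)
  rw [← Set.ncard_coe_finset]
  suffices h : (({g ∈ hX.toFinset | f g = f e} : Finset (Sym2 V)) : Set (Sym2 V)) =
      cut (f e) X by rw [h]; exact hev
  ext g
  simp only [Finset.coe_filter, Finite.mem_toFinset, mem_ofPred_eq]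
  constructor
  · rintro ⟨hg, hge⟩
    exact ⟨hge ▸ (hf g hg).2, hg.2⟩
  · rintro ⟨hg, hg'⟩
    have hgc : g ∈ cut (⋃₀ P) X := ⟨⟨_, hfe.1, hg⟩, hg'⟩
    refine ⟨hgc, ?_⟩
    by_contra hne
    exact Set.disjoint_left.1 (hd (hf g hgc).1 hfe.1 hne) (hf g hgc).2 hg

/-- The countable case: run through the edges, each time removing
a cycle through the current edge if it is still present. -/
lemma EvenCuts.decomposes_of_countable {G : SimpleGraph V} {S : Set (Sym2 V)}
    (hS : EvenCuts S) (hSG : S ⊆ G.edgeSet) (hc : S.Countable) : Decomposes G S := by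
  rcases S.eq_empty_or_nonempty with rfl | hne
  · exact ⟨∅, by simp, by simp, by simp⟩
  obtain ⟨e, rfl⟩ := hc.exists_eq_range hne
  set S := range e
  have hex : ∀ (R : Set (Sym2 V)) (f : Sym2 V), ∃ C, EvenCuts R → R ⊆ S →
      C ⊆ R ∧ EvenCuts (R \ C) ∧ (f ∈ R → f ∈ C) ∧ (C.Nonempty → IsCycleEdgeSet G C) := by
    intro R f
    by_cases h : EvenCuts R ∧ R ⊆ S ∧ f ∈ R
    · obtain ⟨C, hC, hCR, hfC⟩ := h.1.exists_cycle (h.2.1.trans hSG) h.2.2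
      exact ⟨C, fun hR _ => ⟨hCR, hR.sdiff_cycle hC hCR, fun _ => hfC, fun _ => hC⟩⟩
    · refine ⟨∅, fun hR hRS => ⟨empty_subset _, by simpa using hR, fun hf => ?_, by simp⟩⟩
      exact absurd ⟨hR, hRS, hf⟩ h
  choose Φ hΦ using hex
  obtain ⟨R, hR0, hRs⟩ : ∃ R : ℕ → Set (Sym2 V), R 0 = S ∧
      ∀ n, R (n + 1) = R n \ Φ (R n) (e n) :=
    ⟨fun n => Nat.rec S (fun n R => R \ Φ R (e n)) n, rfl, fun _ => rfl⟩
  have hR : ∀ n, EvenCuts (R n) ∧ R n ⊆ S := by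
    intro n
    induction n with
    | zero => rw [hR0]; exact ⟨hS, subset_rfl⟩
    | succ n ih =>
      rw [hRs]
      exact ⟨(hΦ _ (e n) ih.1 ih.2).2.1, sdiff_subset.trans ih.2⟩
  have hanti : Antitone R := antitone_nat_of_succ_le fun n => by rw [hRs]; exact sdiff_subset
  set C : ℕ → Set (Sym2 V) := fun n => Φ (R n) (e n) with hCdef
  have hC : ∀ n, C n ⊆ R n ∧ EvenCuts (R n \ C n) ∧ (e n ∈ R n → e n ∈ C n) ∧
      ((C n).Nonempty → IsCycleEdgeSet G (C n)) := fun n => hΦ _ (e n) (hR n).1 (hR n).2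
  have hdisj : ∀ m n, m < n → Disjoint (C m) (C n) := by
    intro m n hmn
    refine Set.disjoint_left.2 fun f hf hf' => ?_
    have : f ∈ R (m + 1) := hanti hmn ((hC n).1 hf')
    rw [hRs] at this
    exact this.2 hf
  refine ⟨{D | ∃ n, C n = D ∧ D.Nonempty}, ?_, ?_, ?_⟩
  · rintro D ⟨n, rfl, hD⟩
    exact (hC n).2.2.2 hD
  · rintro D ⟨n, rfl, hD⟩ D' ⟨m, rfl, hD'⟩ hne
    rcases lt_trichotomy n m with h | rfl | h
    · exact hdisj _ _ h
    · exact absurd rfl hne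
    · exact (hdisj _ _ h).symm
  · apply Subset.antisymm
    · rintro f ⟨D, ⟨n, rfl, hD⟩, hf⟩
      exact (hR n).2 ((hC n).1 hf)
    · have key : ∀ n f, f ∈ S → f ∉ R n → ∃ m, f ∈ C m := by
        intro n f hf hfn
        induction n with
        | zero => exact absurd (hR0 ▸ hf) hfn
        | succ n ih =>
          by_cases h : f ∈ R n
          · refine ⟨n, ?_⟩
            rw [hRs] at hfn
            by_contra h'
            exact hfn ⟨h, h'⟩
          · exact ih h
      rintro f ⟨n, rfl⟩
      have : ∃ m, e n ∈ C m := by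
        by_cases h : e n ∈ R n
        · exact ⟨n, (hC n).2.2.1 h⟩
        · exact key n _ ⟨n, rfl⟩ h
      obtain ⟨m, hm⟩ := this
      exact ⟨C m, ⟨m, rfl, ⟨_, hm⟩⟩, hm⟩

/-! ### Splitting an edge set with even cuts -/

/-- If any two vertices of `N` that remain connected in `E` after deleting a finite subset of `N`
also remain connected inside `N`, then every finite cut of `N` is a cut of `E`. -/
lemma EvenCuts.of_reflects {E N : Set (Sym2 V)} (hE : EvenCuts E) (hNE : N ⊆ E)
    (h : ∀ F ⊆ N, F.Finite → ∀ x ∈ verts N, ∀ y ∈ verts N,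
      Conn (E \ F) x y → Conn (N \ F) x y) : EvenCuts N := by
  intro X hX
  set F := cut N X with hF
  have hFN : F ⊆ N := fun e he => he.1
  suffices hcut : cut E {v | ∃ x ∈ verts N, x ∈ X ∧ Conn (E \ F) x v} = F by
    rw [← hcut] at hX ⊢
    exact hE _ hX
  ext e
  induction e with | h a b
  constructor
  · intro hab
    obtain ⟨habE, hne⟩ := mem_cut.1 hab
    by_contra habF
    refine hne ?_
    have hiff : ∀ x, Conn (E \ F) x a ↔ Conn (E \ F) x b := fun x => Conn.step_iff ⟨habE, habF⟩
    simp only [mem_ofPred_eq, hiff]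
  · intro habF
    have habN := hFN habF
    refine mem_cut.2 ⟨hNE habN, ?_⟩
    have hside : ∀ v ∈ verts N, (∃ x ∈ verts N, x ∈ X ∧ Conn (E \ F) x v) ↔ v ∈ X := by
      intro v hv
      constructor
      · rintro ⟨x, hx, hxX, hc⟩
        exact (Conn.side (h F hFN hX x hx v hv hc)).1 hxX
      · intro hvX
        exact ⟨v, hv, hvX, .refl⟩
    simp only [mem_ofPred_eq, hside a (left_mem_verts habN), hside b (right_mem_verts habN)]
    exact (mem_cut.1 habF).2

/-- If any two vertices of `N` that are connected outside `N` cannot be separated there by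
finitely many edges, then every finite cut of `E \ N` is a cut of `E`. -/
lemma EvenCuts.sdiff {E N : Set (Sym2 V)} (hE : EvenCuts E)
    (h : ∀ F : Set (Sym2 V), F.Finite → ∀ x ∈ verts N, ∀ y ∈ verts N,
      Conn (E \ N) x y → Conn ((E \ N) \ F) x y) : EvenCuts (E \ N) := by
  intro X hX
  -- Switch sides in each component of `E \ N` that has a vertex of `N` in `X`.
  set Y : Set V := {v | ∃ x ∈ verts N, x ∈ X ∧ Conn (E \ N) x v} with hY
  set X' : Set V := {v | ¬ (v ∈ X ↔ v ∈ Y)} with hX'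
  have hmem : ∀ v, v ∈ X' ↔ ¬ (v ∈ X ↔ v ∈ Y) := fun v => Iff.rfl
  have hN : ∀ v ∈ verts N, v ∉ X' := by
    intro v hv
    rw [hmem, not_not]
    constructor
    · intro hvX
      exact ⟨v, hv, hvX, .refl⟩
    · rintro ⟨x, hx, hxX, hc⟩
      exact (Conn.side (h _ hX x hx v hv hc)).1 hxX
  suffices hcut : cut E X' = cut (E \ N) X by
    rw [← hcut] at hX ⊢
    exact hE _ hX
  ext e
  induction e with | h a b
  rw [mem_cut, mem_cut]
  by_cases habN : s(a, b) ∈ N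
  · have ha := hN a (left_mem_verts habN)
    have hb := hN b (right_mem_verts habN)
    simp [ha, hb, habN]
  · by_cases habE : s(a, b) ∈ E
    · have hab : a ∈ Y ↔ b ∈ Y := by
        have hiff : ∀ x, Conn (E \ N) x a ↔ Conn (E \ N) x b :=
          fun x => Conn.step_iff ⟨habE, habN⟩
        simp only [hY, mem_ofPred_eq, hiff]
      have h1 : s(a, b) ∈ E \ N := ⟨habE, habN⟩
      simp only [hmem, habE, h1, true_and]
      tauto
    · simp [habE]

/-! ### Closure under set-valued operations -/

lemma mk_verts_le {S : Set (Sym2 V)} {κ : Cardinal.{u}} (hκ : ℵ₀ ≤ κ) (hS : #S ≤ κ) :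
    #(verts S) ≤ κ := by
  have : verts S = ⋃ e ∈ S, {v | v ∈ e} := by
    ext v; simp [verts]
  rw [this]
  refine (mk_biUnion_le _ _).trans ?_
  refine (mul_le_mul' hS (ciSup_le' fun e => ?_)).trans (mul_eq_self hκ).le
  refine le_trans ?_ hκ
  induction e.1 with | h a b
  have : {v | v ∈ s(a, b)} = ({a, b} : Set V) := by ext; simp
  rw [this]
  exact ((Set.toFinite ({a, b} : Set V)).countable).le_aleph0

/-- A Löwenheim–Skolem type closure lemma: sets of at most `κ` edges can be closed under
operations whose arguments are finitely many edges and two vertices, and whose values are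
sets of at most `κ` edges, without exceeding the size `κ`. -/
lemma exists_closed {κ : Cardinal.{u}} (hκ : ℵ₀ ≤ κ)
    (Ψ : List (Sym2 V) → V → V → Set (Sym2 V)) (hΨ : ∀ l x y, #(Ψ l x y) ≤ κ)
    {S T : Set (Sym2 V)} (hS : #S ≤ κ) (hST : S ⊆ T) (hΨT : ∀ l x y, Ψ l x y ⊆ T) :
    ∃ M, S ⊆ M ∧ M ⊆ T ∧ #M ≤ κ ∧
      ∀ l : List (Sym2 V), (∀ e ∈ l, e ∈ M) → ∀ x ∈ verts M, ∀ y ∈ verts M, Ψ l x y ⊆ M := by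
  let next : Set (Sym2 V) → Set (Sym2 V) := fun A =>
    A ∪ ⋃ p : List A × verts A × verts A, Ψ (p.1.map Subtype.val) p.2.1 p.2.2
  have hnext : ∀ A : Set (Sym2 V), #A ≤ κ → #(next A) ≤ κ := by
    intro A hA
    refine (mk_union_le _ _).trans ((add_le_add hA ?_).trans (add_eq_self hκ).le)
    refine (mk_iUnion_le _).trans ?_
    refine (mul_le_mul' ?_ (ciSup_le' fun p => hΨ _ _ _)).trans (mul_eq_self hκ).le
    have hl : #(List A) ≤ κ := (mk_list_le_max _).trans (max_le hκ hA)
    have hv := mk_verts_le hκ hA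
    simp only [mk_prod, lift_id]
    calc #(List A) * (#(verts A) * #(verts A)) ≤ κ * (κ * κ) := by gcongr
      _ = κ := by rw [mul_eq_self hκ, mul_eq_self hκ]
  obtain ⟨A, hA0, hAs⟩ : ∃ A : ℕ → Set (Sym2 V), A 0 = S ∧ ∀ n, A (n + 1) = next (A n) :=
    ⟨fun n => Nat.rec S (fun _ B => next B) n, rfl, fun _ => rfl⟩
  have hmono : Monotone A := monotone_nat_of_le_succ fun n => by
    rw [hAs]; exact subset_union_left
  have hcard : ∀ n, #(A n) ≤ κ := by
    intro n
    induction n with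
    | zero => rwa [hA0]
    | succ n ih => rw [hAs]; exact hnext _ ih
  have hAT : ∀ n, A n ⊆ T := by
    intro n
    induction n with
    | zero => rwa [hA0]
    | succ n ih => rw [hAs]; exact union_subset ih (iUnion_subset fun p => hΨT _ _ _)
  refine ⟨⋃ n, A n, ?_, iUnion_subset hAT, ?_, ?_⟩
  · rw [← hA0]; exact subset_iUnion A 0
  · have : (⋃ n, A n) = ⋃ n : ULift.{u} ℕ, A n.down := by
      ext; simp
    rw [this]
    refine (mk_iUnion_le _).trans ?_
    refine (mul_le_mul' ?_ (ciSup_le' fun p => hcard _)).trans (mul_eq_self hκ).le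
    simpa using hκ
  · intro l hl x hx y hy
    have hvert : ∀ v ∈ verts (⋃ n, A n), ∃ n, v ∈ verts (A n) := by
      rintro v ⟨e, he, hve⟩
      obtain ⟨n, hn⟩ := mem_iUnion.1 he
      exact ⟨n, e, hn, hve⟩
    have hlist : ∃ n, ∀ e ∈ l, e ∈ A n := by
      induction l with
      | nil => exact ⟨0, by simp⟩
      | cons a l ih =>
        obtain ⟨n, hn⟩ := ih fun e he => hl e (List.mem_cons_of_mem _ he)
        obtain ⟨m, hm⟩ := mem_iUnion.1 (hl a List.mem_cons_self)
        refine ⟨max n m, fun e he => ?_⟩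
        rcases List.mem_cons.1 he with rfl | he
        · exact hmono (le_max_right _ _) hm
        · exact hmono (le_max_left _ _) (hn e he)
    obtain ⟨n₁, h₁⟩ := hlist
    obtain ⟨n₂, h₂⟩ := hvert x hx
    obtain ⟨n₃, h₃⟩ := hvert y hy
    set n := max n₁ (max n₂ n₃)
    have hlA : ∀ e ∈ l, e ∈ A n := fun e he => hmono (le_max_left _ _) (h₁ e he)
    have hxA : x ∈ verts (A n) :=
      verts_mono (hmono ((le_max_left _ _).trans (le_max_right _ _))) h₂
    have hyA : y ∈ verts (A n) :=
      verts_mono (hmono ((le_max_right _ _).trans (le_max_right _ _))) h₃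
    refine Subset.trans ?_ (subset_iUnion A (n + 1))
    rw [hAs]
    refine Subset.trans ?_ subset_union_right
    lift l to List (A n) using hlA
    exact subset_iUnion (fun p : List (A n) × verts (A n) × verts (A n) =>
      Ψ (p.1.map Subtype.val) p.2.1 p.2.2) (l, ⟨x, hxA⟩, ⟨y, hyA⟩)

/-! ### The filtration -/

/-- Every set is covered by a sequence indexed by the ordinals below the initial ordinal of its
cardinality. -/
lemma exists_enum {α : Type u} [Nonempty α] (A : Set α) :
    ∃ f : Ordinal.{u} → α, A ⊆ f '' Iio (#A).ord := by
  classical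
  have h : #(#A).ord.ToType = #A := by rw [mk_toType, card_ord]
  obtain ⟨g⟩ := Cardinal.eq.1 h
  refine ⟨fun o => if ho : o < (#A).ord then (g (Ordinal.ToType.mk ⟨o, ho⟩) : α)
    else Classical.arbitrary α, fun a ha => ?_⟩
  set o := Ordinal.ToType.mk.symm (g.symm ⟨a, ha⟩) with ho
  refine ⟨o.1, o.2, ?_⟩
  have : o.1 < (#A).ord := o.2
  simp only [this, dif_pos]
  simp [ho]

lemma mk_image_Iio_le {α : Type u} (f : Ordinal.{u} → α) {o : Ordinal.{u}} {κ : Cardinal.{u}}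
    (hκ : ℵ₀ ≤ κ) (ho : o.card ≤ κ) : #(f '' Iio o) ≤ κ := by
  have : f '' Iio o = ⋃ j < o, {f j} := by ext; simp [eq_comm]
  rw [this]
  exact mk_biUnion_le_of_le ho hκ _ fun j _ => by simpa using one_le_aleph0.trans hκ

/-- For `f x y` take an enumeration of a set of edges of minimum cardinality separating `x` from
`y` in `E`, indexed by the initial ordinal of this cardinality. The values of `f x y` at other
ordinals are arbitrary; extra edges do not harm separation. -/
lemma exists_separators (E : Set (Sym2 V)) :
    ∃ f : V → V → Ordinal.{u} → Sym2 V, ∀ x y, ∀ B : Set (Sym2 V), ¬ Conn (E \ B) x y →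
      ¬ Conn (E \ f x y '' Iio (#B).ord) x y := by
  have : ∀ x y, ∃ f : Ordinal.{u} → Sym2 V, ∀ B : Set (Sym2 V), ¬ Conn (E \ B) x y →
      ¬ Conn (E \ f '' Iio (#B).ord) x y := by
    intro x y
    have : Nonempty (Sym2 V) := ⟨s(x, y)⟩
    by_cases hne : ∃ B : Set (Sym2 V), ¬ Conn (E \ B) x y
    · obtain ⟨A, hA, hmin⟩ := exists_minimalFor_of_wellFoundedLT
        (fun B : Set (Sym2 V) => ¬ Conn (E \ B) x y) (fun B => #B) hne
      obtain ⟨f, hf⟩ := exists_enum A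
      refine ⟨f, fun B hB hc => hA (hc.mono (sdiff_subset_sdiff_right (hf.trans ?_)))⟩
      have hle : #A ≤ #B := by
        rcases le_total (#A) (#B) with h | h
        · exact h
        · exact hmin hB h
      exact image_mono (Iio_subset_Iio (ord_le_ord.2 hle))
    · push Not at hne
      exact ⟨fun _ => s(x, y), fun B hB => absurd (hne B) hB⟩
  choose f hf using this
  exact ⟨f, hf⟩

/-- One step of the filtration: a set `M ⊇ N ∪ Z` that is closed under the first `o` values
of all the operations `f x y` (where these are edges of `E`), and such that `M \ N` inherits
even cuts from `E \ N` because it reflects finite separations of `E \ N`. -/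
lemma exists_step {E : Set (Sym2 V)} (f : V → V → Ordinal.{u} → Sym2 V) {κ : Cardinal.{u}}
    (hκ : ℵ₀ ≤ κ) {o : Ordinal.{u}} (ho : o.card ≤ κ) {N Z : Set (Sym2 V)} (hN : #N ≤ κ)
    (hNE : N ⊆ E) (hZ : #Z ≤ κ) (hZE : Z ⊆ E) :
    ∃ M, N ⊆ M ∧ Z ⊆ M ∧ M ⊆ E ∧ #M ≤ κ ∧
      (∀ x ∈ verts M, ∀ y ∈ verts M, ∀ i < o, f x y i ∈ E → f x y i ∈ M) ∧
      (EvenCuts (E \ N) → EvenCuts (M \ N)) := by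
  -- `P l x y` is the edge set of a walk from `x` to `y` in `E \ N` avoiding `l`, if there is one.
  have hex : ∀ (l : List (Sym2 V)) (x y : V), ∃ P : Set (Sym2 V), P.Finite ∧
      P ⊆ (E \ N) \ {e | e ∈ l} ∧ (Conn ((E \ N) \ {e | e ∈ l}) x y → Conn P x y) := by
    intro l x y
    by_cases h : Conn ((E \ N) \ {e | e ∈ l}) x y
    · obtain ⟨P, hP, hPS, hc⟩ := h.exists_finite
      exact ⟨P, hP, hPS, fun _ => hc⟩
    · exact ⟨∅, finite_empty, empty_subset _, fun h' => absurd h' h⟩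
  choose P hPf hPS hPc using hex
  obtain ⟨M, hSM, hME, hMκ, hM⟩ := exists_closed (T := E) (S := N ∪ Z) hκ
    (fun l x y => (f x y '' Iio o ∩ E) ∪ P l x y)
    (fun l x y => (mk_union_le _ _).trans ((add_le_add
      ((mk_le_mk_of_subset inter_subset_left).trans (mk_image_Iio_le _ hκ ho))
      ((hPf l x y).countable.le_aleph0.trans hκ)).trans (add_eq_self hκ).le))
    ((mk_union_le _ _).trans ((add_le_add hN hZ).trans (add_eq_self hκ).le))
    (union_subset hNE hZE)
    (fun l x y => union_subset inter_subset_right fun e he => (hPS l x y he).1.1)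
  refine ⟨M, subset_union_left.trans hSM, subset_union_right.trans hSM, hME, hMκ, ?_, ?_⟩
  · intro x hx y hy i hi hiE
    exact hM [] (by simp) x hx y hy (Or.inl ⟨⟨i, hi, rfl⟩, hiE⟩)
  · intro hev
    refine hev.of_reflects (sdiff_subset_sdiff_left hME) ?_
    intro F hFM hF x hx y hy hc
    obtain ⟨l, rfl⟩ : ∃ l : List (Sym2 V), F = {e | e ∈ l} :=
      ⟨hF.toFinset.toList, by ext; simp⟩
    refine (hPc l x y hc).mono fun e he => ?_
    have heP := hPS l x y he
    have := hM l (fun e he => (hFM he).1) x (verts_mono sdiff_subset hx) y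
      (verts_mono sdiff_subset hy) (Or.inr he)
    exact ⟨⟨this, heP.1.2⟩, heP.2⟩

/-- Induction on the cardinality of `E`. An uncountable `E` is exhausted by an increasing
transfinite sequence of smaller sets `M α`, and the induction hypothesis applies to the
differences of `M α` and the union `N α` of the earlier stages. -/
lemma EvenCuts.decomposes {G : SimpleGraph V} (E : Set (Sym2 V)) (hE : EvenCuts E)
    (hEG : E ⊆ G.edgeSet) : Decomposes G E := by
  induction hn : #E using WellFoundedLT.induction generalizing E with
  | ind c ih
  subst hn
  by_cases hcount : E.Countable
  · exact hE.decomposes_of_countable hEG hcount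
  have hunc : ℵ₀ < #E := by
    rwa [← not_le, le_aleph0_iff_set_countable]
  have : Nonempty (Sym2 V) := by
    rcases E.eq_empty_or_nonempty with rfl | ⟨e, -⟩
    · exact absurd countable_empty hcount
    · exact ⟨e⟩
  obtain ⟨enum, henum⟩ := exists_enum E
  obtain ⟨f, hf⟩ := exists_separators E
  -- Stage `α` will be closed under the values of the `f x y` at the ordinals below `b α`,
  -- and will have at most `k α` edges.
  set b : Ordinal.{u} → Ordinal.{u} := fun α => max Ordinal.omega0 (Order.succ α) with hb
  set k : Ordinal.{u} → Cardinal.{u} := fun α => max ℵ₀ α.card with hk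
  have hkω : ∀ α, ℵ₀ ≤ k α := fun α => le_max_left _ _
  have hkmono : ∀ {α β}, α ≤ β → k α ≤ k β := fun h => max_le_max le_rfl (Ordinal.card_le_card h)
  have hbk : ∀ α, (b α).card ≤ k α := by
    intro α
    rcases max_cases Ordinal.omega0 (Order.succ α) with ⟨h, -⟩ | ⟨h, -⟩
    · simp only [hb, h, Ordinal.card_omega0]
      exact hkω α
    · simp only [hb, h]
      rw [Order.succ_eq_add_one, Ordinal.card_add_one]
      exact (add_le_add (le_max_right _ _) (one_le_aleph0.trans (hkω α))).trans
        (add_eq_self (hkω α)).le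
  have hstep : ∀ (α : Ordinal.{u}) (N : Set (Sym2 V)), ∃ M, #N ≤ k α → N ⊆ E →
      N ⊆ M ∧ {enum α} ∩ E ⊆ M ∧ M ⊆ E ∧ #M ≤ k α ∧
      (∀ x ∈ verts M, ∀ y ∈ verts M, ∀ i < b α, f x y i ∈ E → f x y i ∈ M) ∧
      (EvenCuts (E \ N) → EvenCuts (M \ N)) := by
    intro α N
    by_cases h : #N ≤ k α ∧ N ⊆ E
    · obtain ⟨M, hM⟩ := exists_step (E := E) f (hkω α) (hbk α) h.1 h.2
        (Z := {enum α} ∩ E) (((finite_singleton _).inter_of_left _).countable.le_aleph0.trans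
          (hkω α)) inter_subset_right
      exact ⟨M, fun _ _ => hM⟩
    · exact ⟨∅, fun h1 h2 => absurd ⟨h1, h2⟩ h⟩
  choose Φ hΦ using hstep
  obtain ⟨M, hMrec⟩ : ∃ M : Ordinal.{u} → Set (Sym2 V), ∀ α, M α = Φ α (⋃ β < α, M β) := by
    refine ⟨WellFounded.fix (r := ((· < ·) : Ordinal.{u} → Ordinal.{u} → Prop))
      Ordinal.lt_wf (fun α g => Φ α (⋃ β, ⋃ h : β < α, g β h)), fun α => ?_⟩
    rw [WellFounded.fix_eq]
  set N : Ordinal.{u} → Set (Sym2 V) := fun α => ⋃ β < α, M β with hN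
  have hMN : ∀ α, M α = Φ α (N α) := hMrec
  have hbound : ∀ α, #(M α) ≤ k α ∧ M α ⊆ E ∧ #(N α) ≤ k α ∧ N α ⊆ E := by
    intro α
    induction α using WellFoundedLT.induction with
    | ind α ih
    have h1 : #(N α) ≤ k α := mk_biUnion_le_of_le (le_max_right _ _) (hkω α) _
      fun β hβ => (ih β hβ).1.trans (hkmono hβ.le)
    have h2 : N α ⊆ E := iUnion₂_subset fun β hβ => (ih β hβ).2.1
    have := hΦ α (N α) h1 h2
    rw [← hMN] at this
    exact ⟨this.2.2.2.1, this.2.2.1, h1, h2⟩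
  have hM : ∀ α, N α ⊆ M α ∧ {enum α} ∩ E ⊆ M α ∧ M α ⊆ E ∧ #(M α) ≤ k α ∧
      (∀ x ∈ verts (M α), ∀ y ∈ verts (M α), ∀ i < b α, f x y i ∈ E → f x y i ∈ M α) ∧
      (EvenCuts (E \ N α) → EvenCuts (M α \ N α)) := by
    intro α
    have := hΦ α (N α) (hbound α).2.2.1 (hbound α).2.2.2
    rwa [← hMN] at this
  have hMsub : ∀ {α β}, α < β → M α ⊆ N β := fun {α β} h => subset_iUnion₂_of_subset α h subset_rfl
  have hMmono : Monotone M := by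
    intro α β h
    rcases h.eq_or_lt with rfl | h
    · exact subset_rfl
    · exact (hMsub h).trans (hM β).1
  have hvert : ∀ α, ∀ v ∈ verts (N α), ∃ β < α, v ∈ verts (M β) := by
    rintro α v ⟨e, he, hve⟩
    obtain ⟨β, hβ, heβ⟩ := mem_iUnion₂.1 he
    exact ⟨β, hβ, e, heβ, hve⟩
  -- The values of `f x y` are absorbed one at a time, rather than separator by separator, so
  -- that closure passes to `N α` also when `α` is a limit cardinal.
  have hNclosed : ∀ α, ∀ x ∈ verts (N α), ∀ y ∈ verts (N α), ∀ i < max Ordinal.omega0 α,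
      f x y i ∈ E → f x y i ∈ N α := by
    intro α x hx y hy i hi hiE
    obtain ⟨β₁, hβ₁, hx'⟩ := hvert α x hx
    obtain ⟨β₂, hβ₂, hy'⟩ := hvert α y hy
    obtain ⟨γ, hγ, h1, h2, h3⟩ : ∃ γ < α, β₁ ≤ γ ∧ β₂ ≤ γ ∧ i < b γ := by
      by_cases hiω : i < Ordinal.omega0
      · exact ⟨max β₁ β₂, max_lt hβ₁ hβ₂, le_max_left _ _, le_max_right _ _,
          lt_max_of_lt_left hiω⟩
      · have hiα : i < α := (lt_max_iff.1 hi).resolve_left hiω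
        exact ⟨max i (max β₁ β₂), max_lt hiα (max_lt hβ₁ hβ₂),
          (le_max_left _ _).trans (le_max_right _ _),
          (le_max_right _ _).trans (le_max_right _ _),
          lt_max_of_lt_right (Order.lt_succ_of_le (le_max_left _ _))⟩
    exact hMsub hγ ((hM γ).2.2.2.2.1 x (verts_mono (hMmono h1) hx') y
      (verts_mono (hMmono h2) hy') i h3 hiE)
  have hNev : ∀ α, EvenCuts (E \ N α) := by
    intro α
    refine hE.sdiff fun F hF x hx y hy hc => ?_
    by_contra hsep
    rw [Set.sdiff_sdiff] at hsep
    refine hf x y (N α ∪ F) hsep (Conn.mono ?_ hc)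
    intro e he
    refine ⟨he.1, ?_⟩
    rintro ⟨i, hi, rfl⟩
    refine he.2 (hNclosed α x hx y hy i (lt_of_lt_of_le hi ?_) he.1)
    have hcard : #(N α ∪ F : Set (Sym2 V)) ≤ k α :=
      (mk_union_le _ _).trans ((add_le_add (hbound α).2.2.1
        (hF.countable.le_aleph0.trans (hkω α))).trans (add_eq_self (hkω α)).le)
    rw [ord_le]
    refine hcard.trans ?_
    exact max_le (Ordinal.card_omega0 ▸ Ordinal.card_le_card (le_max_left _ _))
      (Ordinal.card_le_card (le_max_right _ _))
  have hDev : ∀ α, EvenCuts (M α \ N α) := fun α => (hM α).2.2.2.2.2 (hNev α)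
  have hDdec : ∀ α < (#E).ord, Decomposes G (M α \ N α) := by
    intro α hα
    refine ih _ ?_ _ (hDev α) ((sdiff_subset.trans (hM α).2.2.1).trans hEG) rfl
    exact (mk_le_mk_of_subset sdiff_subset).trans_lt
      ((hbound α).1.trans_lt (max_lt hunc (lt_ord.1 hα)))
  choose! P hPc hPd hPu using hDdec
  have hDdisj : ∀ α β, α < β → Disjoint (M α \ N α) (M β \ N β) := fun α β h =>
    Set.disjoint_left.2 fun e he he' => he'.2 (hMsub h he.1)
  have hPsub : ∀ α < (#E).ord, ∀ C ∈ P α, C ⊆ M α \ N α := fun α hα C hC => by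
    rw [← hPu α hα]; exact subset_sUnion_of_mem hC
  refine ⟨⋃ α < (#E).ord, P α, ?_, ?_, ?_⟩
  · intro C hC
    obtain ⟨α, hα, hC⟩ := mem_iUnion₂.1 hC
    exact hPc α hα C hC
  · intro C hC C' hC' hne
    obtain ⟨α, hα, hC⟩ := mem_iUnion₂.1 hC
    obtain ⟨β, hβ, hC'⟩ := mem_iUnion₂.1 hC'
    rcases lt_trichotomy α β with h | rfl | h
    · exact (hDdisj α β h).mono (hPsub α hα C hC) (hPsub β hβ C' hC')
    · exact hPd α hα hC hC' hne
    · exact ((hDdisj β α h).mono (hPsub β hβ C' hC') (hPsub α hα C hC)).symm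
  · apply Subset.antisymm
    · rintro e ⟨C, hC, he⟩
      obtain ⟨α, hα, hC⟩ := mem_iUnion₂.1 hC
      exact (hM α).2.2.1 (hPsub α hα C hC he).1
    · intro e he
      obtain ⟨α, hα, rfl⟩ := henum he
      have hαM : enum α ∈ M α := (hM α).2.1 ⟨rfl, he⟩
      obtain ⟨β, hβ, hmin⟩ := exists_minimal_of_wellFoundedLT (fun β => enum α ∈ M β) ⟨α, hαM⟩
      have hβα : β ≤ α := le_of_not_gt fun h => absurd (hmin hαM h.le) (not_le.2 h)
      have hβE : β < (#E).ord := hβα.trans_lt hα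
      have hD : enum α ∈ M β \ N β := by
        refine ⟨hβ, fun h => ?_⟩
        obtain ⟨γ, hγ, hγM⟩ := mem_iUnion₂.1 h
        exact absurd (hmin hγM hγ.le) (not_le.2 hγ)
      rw [← hPu β hβE] at hD
      obtain ⟨C, hC, heC⟩ := hD
      exact ⟨C, mem_iUnion₂.2 ⟨β, hβE, hC⟩, heC⟩

end NashWilliams

/-- **Nash-Williams' theorem.** The edge set of an undirected graph can be
partitioned into cycles if and only if every cut is infinite or even. -/
theorem edge_partition_into_cycles_iff_cuts_infinite_or_even {V : Type*}
    (G : SimpleGraph V) :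
    (∃ P : Set (Set (Sym2 V)), (∀ C ∈ P, IsCycleEdgeSet G C) ∧
        P.PairwiseDisjoint id ∧ ⋃₀ P = G.edgeSet) ↔
      ∀ X : Set V, (cutEdges G X).Infinite ∨ Even (cutEdges G X).ncard := by
  constructor
  · intro h X
    by_cases hX : (cutEdges G X).Finite
    · exact Or.inr (NashWilliams.Decomposes.evenCuts h X hX)
    · exact Or.inl hX
  · intro h
    exact NashWilliams.EvenCuts.decomposes G.edgeSet
      (fun X hX => (h X).resolve_left (not_not.2 hX)) subset_rfl
end

section
/- Let D = (V, A) be an unbalanced digraph. Then D has a weakly connected component with vertex set Z, and a partition of Z into two nonempty sets X and Y, such that the induced subdigraphs D[X] and D[Y] are both weakly connected and X is overloaded in D, i.e., |out_D(X)| < |in_D(X)|. -/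
/-- Adjacency in the underlying undirected graph of the subdigraph of `A`
induced by the vertex set `S`. -/
def AdjOn {V : Type*} (A : Set (V × V)) (S : Set V) (u v : V) : Prop :=
  u ∈ S ∧ v ∈ S ∧ ((u, v) ∈ A ∨ (v, u) ∈ A)

/-- Reachability in the underlying undirected graph of the subdigraph of `A`
induced by the vertex set `S`. -/
def ReachOn {V : Type*} (A : Set (V × V)) (S : Set V) : V → V → Prop :=
  Relation.ReflTransGen (AdjOn A S)

/-- `Y` is the vertex set of a weakly connected component of the subdigraph of
`A` induced by the vertex set `S`. -/
def IsWeakComponent {V : Type*} (A : Set (V × V)) (S : Set V) (Y : Set V) : Prop :=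
  ∃ y ∈ S, Y = {v | ReachOn A S y v}

/-- The subdigraph of `A` induced by the vertex set `X` is weakly connected. -/
def IsWeaklyConnectedOn {V : Type*} (A : Set (V × V)) (X : Set V) : Prop :=
  X.Nonempty ∧ ∀ u ∈ X, ∀ v ∈ X, ReachOn A X u v

open Cardinal

theorem reachOn_symm {V : Type*} {A : Set (V × V)} {S : Set V} {u v : V}
    (h : ReachOn A S u v) : ReachOn A S v u := by
  induction h with
  | refl => exact Relation.ReflTransGen.refl
  | tail _ hab ih => exact Relation.ReflTransGen.head ⟨hab.2.1, hab.1, hab.2.2.symm⟩ ih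

theorem reachOn_mono {V : Type*} {A : Set (V × V)} {S T : Set V} (hST : S ⊆ T) {u v : V}
    (h : ReachOn A S u v) : ReachOn A T u v :=
  Relation.ReflTransGen.mono (fun _ _ hab => ⟨hST hab.1, hST hab.2.1, hab.2.2⟩) _ _ h

theorem reachOn_mem {V : Type*} {A : Set (V × V)} {S : Set V} {u v : V}
    (h : ReachOn A S u v) (hu : u ∈ S) : v ∈ S := by
  induction h with
  | refl => exact hu
  | tail _ hab _ => exact hab.2.1

theorem component_subset {V : Type*} {A : Set (V × V)} {S C : Set V}
    (hC : IsWeakComponent A S C) : C ⊆ S := by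
  obtain ⟨y, hy, rfl⟩ := hC
  exact fun v hv => reachOn_mem hv hy

theorem component_eq_of_mem {V : Type*} {A : Set (V × V)} {S C : Set V}
    (hC : IsWeakComponent A S C) {v : V} (hv : v ∈ C) : {w | ReachOn A S v w} = C := by
  obtain ⟨y, hy, rfl⟩ := hC
  ext w
  exact ⟨fun h => Relation.ReflTransGen.trans hv h,
    fun h => Relation.ReflTransGen.trans (reachOn_symm hv) h⟩

/-- A component of `D[S]` is closed under adjacency within `S`. -/
theorem component_closed {V : Type*} {A : Set (V × V)} {S C : Set V}
    (hC : IsWeakComponent A S C) {u v : V} (hu : u ∈ C) (hv : v ∈ S)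
    (huv : (u, v) ∈ A ∨ (v, u) ∈ A) : v ∈ C := by
  have huS := component_subset hC hu
  obtain ⟨y, hy, rfl⟩ := hC
  exact Relation.ReflTransGen.tail hu ⟨huS, hv, huv⟩

theorem component_connected {V : Type*} {A : Set (V × V)} {S C : Set V}
    (hC : IsWeakComponent A S C) : IsWeaklyConnectedOn A C := by
  have key : ∀ u ∈ C, ∀ v, ReachOn A S u v → ReachOn A C u v ∧ v ∈ C := by
    intro u hu v h
    induction h with
    | refl => exact ⟨Relation.ReflTransGen.refl, hu⟩
    | tail _ hab ih =>
      have hc := component_closed hC ih.2 hab.2.1 hab.2.2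
      exact ⟨ih.1.tail ⟨ih.2, hc, hab.2.2⟩, hc⟩
  refine ⟨?_, fun u hu v hv => (key u hu v ?_).1⟩
  · obtain ⟨y, hy, rfl⟩ := hC
    exact ⟨y, Relation.ReflTransGen.refl⟩
  · rw [← component_eq_of_mem hC hu] at hv
    exact hv

theorem inArcs_component {V : Type*} {A : Set (V × V)} {S C : Set V}
    (hC : IsWeakComponent A S C) :
    inArcs A C = {e ∈ inArcs A S | {w | ReachOn A S e.2 w} = C} := by
  ext ⟨a, b⟩
  constructor
  · rintro ⟨hA, ha, hb⟩
    exact ⟨⟨hA, fun haS => ha (component_closed hC hb haS (Or.inr hA)), component_subset hC hb⟩,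
      component_eq_of_mem hC hb⟩
  · rintro ⟨⟨hA, ha, hb⟩, h⟩
    exact ⟨hA, fun haC => ha (component_subset hC haC), h ▸ Relation.ReflTransGen.refl⟩

theorem outArcs_component {V : Type*} {A : Set (V × V)} {S C : Set V}
    (hC : IsWeakComponent A S C) :
    outArcs A C = {e ∈ outArcs A S | {w | ReachOn A S e.1 w} = C} := by
  ext ⟨a, b⟩
  constructor
  · rintro ⟨hA, ha, hb⟩
    exact ⟨⟨hA, component_subset hC ha, fun hbS => hb (component_closed hC ha hbS (Or.inl hA))⟩,
      component_eq_of_mem hC ha⟩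
  · rintro ⟨⟨hA, ha, hb⟩, h⟩
    exact ⟨hA, h ▸ Relation.ReflTransGen.refl, fun hbC => hb (component_subset hC hbC)⟩

/-- If each fibre of `p` on `P` is at most as large as the corresponding fibre of `q` on `Q`, then
`P` is at most as large as `Q`. -/
theorem mk_le_of_fibres {α ι : Type*} (P Q : Set α) (p q : α → ι)
    (h : ∀ e ∈ P, #{x ∈ P | p x = p e} ≤ #{x ∈ Q | q x = p e}) : #P ≤ #Q := by
  have hf : ∀ i : ι, ∃ f : α → α, (∃ e ∈ P, p e = i) →
      Set.MapsTo f {x ∈ P | p x = i} {x ∈ Q | q x = i} ∧ Set.InjOn f {x ∈ P | p x = i} := by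
    intro i
    by_cases hi : ∃ e ∈ P, p e = i
    · obtain ⟨e, he, rfl⟩ := hi
      obtain ⟨g⟩ := h e he
      classical
      refine ⟨fun x => if hx : x ∈ {x ∈ P | p x = p e} then (g ⟨x, hx⟩).1 else x,
        fun _ => ⟨fun x hx => ?_, fun x hx y hy hxy => ?_⟩⟩
      · simp only [dif_pos hx]
        exact (g ⟨x, hx⟩).2
      · simp only [dif_pos hx, dif_pos hy] at hxy
        exact congrArg Subtype.val (g.injective (Subtype.ext hxy))
    · exact ⟨id, fun h => absurd h hi⟩
  choose f hf using hf
  have hmaps : ∀ x ∈ P, f (p x) x ∈ Q ∧ q (f (p x) x) = p x :=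
    fun x hx => (hf (p x) ⟨x, hx, rfl⟩).1 ⟨hx, rfl⟩
  refine ⟨⟨fun x => ⟨f (p x) x, (hmaps x x.2).1⟩, fun x y hxy => ?_⟩⟩
  have hxy' : f (p x) x = f (p y) y := congrArg Subtype.val hxy
  have hp : p x = p y := by rw [← (hmaps x x.2).2, hxy', (hmaps y y.2).2]
  rw [← hp] at hxy'
  exact Subtype.ext ((hf (p x) ⟨x, x.2, rfl⟩).2 ⟨x.2, rfl⟩ ⟨y.2, hp.symm⟩ hxy')

/-- An overloaded set `S` contains an overloaded weak component of `D[S]`. -/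
theorem exists_component_out_lt_in {V : Type*} {A : Set (V × V)} {S : Set V}
    (h : #(outArcs A S) < #(inArcs A S)) :
    ∃ C, IsWeakComponent A S C ∧ #(outArcs A C) < #(inArcs A C) := by
  by_contra! hcon
  refine h.not_ge (mk_le_of_fibres _ _ (fun e => {w | ReachOn A S e.2 w})
    (fun e => {w | ReachOn A S e.1 w}) fun e he => ?_)
  have hC : IsWeakComponent A S {w | ReachOn A S e.2 w} := ⟨e.2, he.2.2, rfl⟩
  have := hcon _ hC
  rwa [inArcs_component hC, outArcs_component hC] at this

/-- The version of `exists_component_out_lt_in` with in- and out-arcs exchanged. -/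
theorem exists_component_in_lt_out {V : Type*} {A : Set (V × V)} {S : Set V}
    (h : #(inArcs A S) < #(outArcs A S)) :
    ∃ C, IsWeakComponent A S C ∧ #(inArcs A C) < #(outArcs A C) := by
  by_contra! hcon
  refine h.not_ge (mk_le_of_fibres _ _ (fun e => {w | ReachOn A S e.1 w})
    (fun e => {w | ReachOn A S e.2 w}) fun e he => ?_)
  have hC : IsWeakComponent A S {w | ReachOn A S e.1 w} := ⟨e.1, he.2.1, rfl⟩
  have := hcon _ hC
  rwa [inArcs_component hC, outArcs_component hC] at this

theorem inArcs_compl {V : Type*} (A : Set (V × V)) (S : Set V) :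
    inArcs A Sᶜ = outArcs A S := by
  ext e; simp [inArcs, outArcs]

theorem outArcs_compl {V : Type*} (A : Set (V × V)) (S : Set V) :
    outArcs A Sᶜ = inArcs A S := by
  ext e; simp [inArcs, outArcs]

/-- In an unbalanced loop-free digraph there is a weakly connected component
`Z` together with a partition of `Z` into `X` and `Y` such that the induced
subdigraphs on `X` and on `Y` are weakly connected and `X` is overloaded. -/
theorem exists_component_partition_with_overloaded_part {V : Type*}
    (A : Set (V × V)) (hA : ∀ e ∈ A, e.1 ≠ e.2) (hub : ¬ IsBalanced A) :
    ∃ Z X Y : Set V, IsWeakComponent A Set.univ Z ∧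
      X ∪ Y = Z ∧ Disjoint X Y ∧ X.Nonempty ∧ Y.Nonempty ∧
      IsWeaklyConnectedOn A X ∧ IsWeaklyConnectedOn A Y ∧
      Cardinal.mk (outArcs A X) < Cardinal.mk (inArcs A X) := by
  obtain ⟨S, hS⟩ : ∃ S : Set V, #(outArcs A S) < #(inArcs A S) := by
    unfold IsBalanced at hub
    push Not at hub
    obtain ⟨S, hS⟩ := hub
    rcases lt_or_gt_of_ne hS with h | h
    · exact ⟨Sᶜ, by rwa [inArcs_compl, outArcs_compl]⟩
    · exact ⟨S, h⟩
  obtain ⟨B, hBS, hB⟩ := exists_component_out_lt_in hS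
  have hBconn := component_connected hBS
  rw [← inArcs_compl A B, ← outArcs_compl A B] at hB
  obtain ⟨Y, hYB, hY⟩ := exists_component_in_lt_out hB
  have hYconn := component_connected hYB
  have hBY : ∀ v ∈ B, v ∉ Y := fun v hv hvY => component_subset hYB hvY hv
  obtain ⟨⟨y, b⟩, hyb, hyY, hbY⟩ : (outArcs A Y).Nonempty := by
    rw [Set.nonempty_iff_ne_empty]
    intro h
    rw [h, mk_eq_zero (∅ : Set (V × V))] at hY
    exact absurd hY not_lt_zero
  dsimp only at hyY hbY
  -- An arc leaving `Y` ends in `B`, since `Y` is a component of the complement of `B`.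
  have hbB : b ∈ B := by
    by_contra hb
    exact hbY (component_closed hYB hyY hb (Or.inl hyb))
  have hZ : IsWeakComponent A Set.univ {v | ReachOn A Set.univ b v} := ⟨b, trivial, rfl⟩
  set Z := {v | ReachOn A Set.univ b v} with hZdef
  have hBZ : B ⊆ Z := fun v hv => reachOn_mono (Set.subset_univ _) (hBconn.2 b hbB v hv)
  have hyZ : y ∈ Z := Relation.ReflTransGen.single ⟨trivial, trivial, Or.inr hyb⟩
  have hYZ : Y ⊆ Z := fun v hv => Relation.ReflTransGen.trans hyZ
    (reachOn_mono (Set.subset_univ _) (hYconn.2 y hyY v hv))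
  have hBX : B ⊆ Z \ Y := fun v hv => ⟨hBZ hv, hBY v hv⟩
  have hreach : ∀ v, ReachOn A Set.univ v b → v ∉ Y → ReachOn A (Z \ Y) v b := by
    intro v hv
    induction hv using Relation.ReflTransGen.head_induction_on with
    | refl => exact fun _ => Relation.ReflTransGen.refl
    | @head u w huw hwb ih =>
      intro hu
      by_cases hw : w ∈ Y
      · -- The walk enters `Y` from `u`, which forces `u ∈ B`.
        have huB : u ∈ B := by
          by_contra huB
          exact hu (component_closed hYB hw huB huw.2.2.symm)
        exact reachOn_mono hBX (hBconn.2 u huB b hbB)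
      · have hwZ : w ∈ Z := reachOn_symm hwb
        exact Relation.ReflTransGen.head
          ⟨⟨component_closed hZ hwZ trivial huw.2.2.symm, hu⟩, ⟨hwZ, hw⟩, huw.2.2⟩ (ih hw)
  have hout : outArcs A (Z \ Y) = inArcs A Y := by
    ext ⟨u, v⟩
    constructor
    · rintro ⟨huv, hu, hv⟩
      have hvZ : v ∈ Z := component_closed hZ hu.1 trivial (Or.inl huv)
      exact ⟨huv, hu.2, by_contra fun h => hv ⟨hvZ, h⟩⟩
    · rintro ⟨huv, hu, hv⟩
      exact ⟨huv, ⟨component_closed hZ (hYZ hv) trivial (Or.inr huv), hu⟩, fun h => h.2 hv⟩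
  have hin : inArcs A (Z \ Y) = outArcs A Y := by
    ext ⟨u, v⟩
    constructor
    · rintro ⟨huv, hu, hv⟩
      have huZ : u ∈ Z := component_closed hZ hv.1 trivial (Or.inr huv)
      exact ⟨huv, by_contra fun h => hu ⟨huZ, h⟩, hv.2⟩
    · rintro ⟨huv, hu, hv⟩
      exact ⟨huv, fun h => h.2 hu, ⟨component_closed hZ (hYZ hu) trivial (Or.inl huv), hv⟩⟩
  have hXne : (Z \ Y).Nonempty := ⟨b, hBX hbB⟩
  refine ⟨Z, Z \ Y, Y, hZ, Set.sdiff_union_of_subset hYZ, Set.disjoint_sdiff_left, hXne, hYconn.1,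
    ⟨hXne, fun u hu v hv => ?_⟩, hYconn, ?_⟩
  · exact Relation.ReflTransGen.trans (hreach u (reachOn_symm hu.1) hu.2)
      (reachOn_symm (hreach v (reachOn_symm hv.1) hv.2))
  · rwa [hout, hin]
end

section
/- Let D = (V, A) be a balanced digraph. Then every arc of D lies on a dicycle: for each (u, v) ∈ A there is a dicycle C of D with (u, v) ∈ C. -/
/-- `g 0, …, g n` is a directed walk of length `n` from `v` to `u`; the values of `g` beyond `n`
are irrelevant. -/
def IsDiwalk {V : Type*} (A : Set (V × V)) (v u : V) (n : ℕ) (g : ℕ → V) : Prop :=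
  g 0 = v ∧ g n = u ∧ ∀ i < n, (g i, g (i + 1)) ∈ A

theorem exists_shorter_walk {V : Type*} {A : Set (V × V)} {v u : V} {n : ℕ} {g : ℕ → V}
    (hg : IsDiwalk A v u n g) {i j : ℕ} (hij : i < j) (hjn : j ≤ n) (h : g i = g j) :
    ∃ m < n, ∃ g', IsDiwalk A v u m g' := by
  obtain ⟨h0, hn, hs⟩ := hg
  refine ⟨n - (j - i), by omega, fun k => if k ≤ i then g k else g (k + (j - i)), ?_, ?_, ?_⟩
  · simpa using h0
  · by_cases hj : j = n
    · have : n - (j - i) = i := by omega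
      simp only [this, le_refl, if_true, h]
      rw [hj, hn]
    · have h1 : ¬ n - (j - i) ≤ i := by omega
      have h2 : n - (j - i) + (j - i) = n := by omega
      simp only [h1, if_false, h2, hn]
  · intro k hk
    rcases lt_trichotomy k i with hki | rfl | hki
    · have h1 : k ≤ i := by omega
      have h2 : k + 1 ≤ i := by omega
      simp only [h1, h2, if_true]
      exact hs k (by omega)
    · have h2 : ¬ k + 1 ≤ k := by omega
      have h3 : k + 1 + (j - k) = j + 1 := by omega
      simp only [le_refl, h2, if_true, if_false, h3, h]
      exact hs j (by omega)
    · have h1 : ¬ k ≤ i := by omega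
      have h2 : ¬ k + 1 ≤ i := by omega
      have h3 : k + 1 + (j - i) = k + (j - i) + 1 := by omega
      simp only [h1, h2, if_false, h3]
      exact hs _ (by omega)

theorem exists_walk_of_balanced {V : Type*} {A : Set (V × V)} (hbal : IsBalanced A)
    {u v : V} (huv : (u, v) ∈ A) : ∃ n g, IsDiwalk A v u n g := by
  let X : Set V := {w | ∃ n g, IsDiwalk A v w n g}
  have hv : v ∈ X := ⟨0, fun _ => v, rfl, rfl, by simp⟩
  have hout : outArcs A X = ∅ := by
    rw [Set.eq_empty_iff_forall_notMem]
    rintro ⟨a, b⟩ ⟨hab, ⟨n, g, h0, hn, hs⟩, hb⟩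
    refine hb ⟨n + 1, fun k => if k ≤ n then g k else b, by simpa using h0, by simp, ?_⟩
    intro k hk
    rcases Nat.lt_succ_iff_lt_or_eq.mp hk with hk | rfl
    · simpa [hk.le, Nat.succ_le_of_lt hk] using hs k hk
    · simpa [hn] using hab
  have hin : inArcs A X = ∅ := by
    have h := hbal X
    rwa [hout, Cardinal.mk_eq_zero (∅ : Set (V × V)), Cardinal.mk_set_eq_zero_iff] at h
  by_contra hu
  have : (u, v) ∈ inArcs A X := ⟨huv, hu, hv⟩
  simp [hin] at this

/-- In a balanced loop-free digraph every arc lies on a dicycle. -/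
theorem balanced_arc_mem_dicycle {V : Type*} (A : Set (V × V))
    (hA : ∀ e ∈ A, e.1 ≠ e.2) (hbal : IsBalanced A)
    (u v : V) (huv : (u, v) ∈ A) :
    ∃ C : Set (V × V), IsDicycle A C ∧ (u, v) ∈ C := by
  classical
  have hex := exists_walk_of_balanced hbal huv
  set n := Nat.find hex with hn_def
  obtain ⟨g, hg⟩ : ∃ g, IsDiwalk A v u n g := Nat.find_spec hex
  have hne : ∀ i j, i < j → j ≤ n → g i ≠ g j := by
    intro i j hij hj h
    obtain ⟨m, hm, hw⟩ := exists_shorter_walk hg hij hj h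
    exact Nat.find_min hex hm hw
  obtain ⟨h0, hn, hs⟩ := hg
  have hpos : n ≠ 0 := by
    intro h
    rw [h] at hn
    exact hA _ huv (hn.symm.trans h0)
  have hlast : (n : ZMod (n + 1)).val = n := ZMod.val_natCast_of_lt (Nat.lt_succ_self n)
  have hwrap : (n : ZMod (n + 1)) + 1 = 0 := by exact_mod_cast ZMod.natCast_self (n + 1)
  refine ⟨_, ⟨n + 1, fun i => g i.val, by omega, ?_, rfl, ?_⟩, ⟨(n : ZMod (n + 1)), ?_⟩⟩
  · intro i j hij
    have hi := ZMod.val_lt i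
    have hj := ZMod.val_lt j
    apply ZMod.val_injective
    rcases lt_trichotomy i.val j.val with h | h | h
    · exact absurd hij (hne _ _ h (by omega))
    · exact h
    · exact absurd hij.symm (hne _ _ h (by omega))
  · rintro _ ⟨i, rfl⟩
    have hi := ZMod.val_lt i
    by_cases h : i.val = n
    · have hin : i = (n : ZMod (n + 1)) := ZMod.val_injective _ (h.trans hlast.symm)
      subst hin
      simpa only [hlast, hwrap, ZMod.val_zero, h0, hn] using huv
    · have hsucc : (i + 1).val = i.val + 1 := by
        have h1 : (1 : ZMod (n + 1)).val = 1 := ZMod.val_one'' (by omega)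
        rw [ZMod.val_add_of_lt (by omega), h1]
      simpa only [hsucc] using hs i.val (by omega)
  · simp only [hlast, hwrap, ZMod.val_zero, h0, hn]
end

section
/- Let G be a simple undirected graph on a vertex type V, let E₀ be a set of edges of G, let H be the graph G with the edges of E₀ deleted, and let W be the set of all endpoints of edges in E₀. Let κ be an infinite cardinal with |E₀| ≤ κ. Assume that for all distinct u, v ∈ W lying in the same connected component of H, no set of at most κ edges of G separates u from v in G (i.e., after deleting any edge set of cardinality at most κ from G, u and v remain connected). Let x ≠ y be vertices in the same connected component of H, and let F be a set of edges of H with |F| ≤ κ that separates x and y in H. Then F separates x and y in the whole graph G. -/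
/-!
Taking `F' = F ∪ E₀` in the connectivity hypothesis shows that two vertices of `W` in the same
component of `H` stay connected in `H - F`. A walk from `x` to `y` in `G - F` that is not a walk
in `H - F` uses an edge of `E₀`; following it from either end up to the nearest edge of `E₀`
(`reachable_or_exists_endpoint`) connects `x` to some `u ∈ W` and `y` to some `v ∈ W` inside
`H - F`. As `x` and `y` lie in one component of `H`, so do `u` and `v`, hence `u` and `v`, and with
them `x` and `y`, are connected in `H - F`.
-/

/-- Following a walk from `a` to `b` until it first uses an edge of `E₀` either reaches `b` or
stops at an endpoint of an edge of `E₀`, without having used any edge of `E₀`. -/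
theorem reachable_or_exists_endpoint {V : Type*} (K : SimpleGraph V) (E₀ : Set (Sym2 V))
    {a b : V} (h : K.Reachable a b) :
    (K.deleteEdges E₀).Reachable a b ∨
      ∃ w, (∃ e ∈ E₀, w ∈ e) ∧ (K.deleteEdges E₀).Reachable a w := by
  obtain ⟨p⟩ := h
  induction p with
  | nil => exact Or.inl (SimpleGraph.Reachable.refl _)
  | @cons a c b hac p ih =>
    by_cases he : s(a, c) ∈ E₀
    · exact Or.inr ⟨a, ⟨_, he, Sym2.mem_mk_left a c⟩, SimpleGraph.Reachable.refl _⟩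
    · have hac' : (K.deleteEdges E₀).Reachable a c :=
        SimpleGraph.Adj.reachable (SimpleGraph.deleteEdges_adj.2 ⟨hac, he⟩)
      rcases ih with h | ⟨w, hw, h⟩
      · exact Or.inl (hac'.trans h)
      · exact Or.inr ⟨w, hw, hac'.trans h⟩

/-- **Combinatorial separation lemma** (underlying Proposition 4.4 of the paper).
Let `H` be the graph `G` with the edges of `E₀` deleted and let `W` be the set of
endpoints of edges of `E₀`, where `|E₀| ≤ κ` for an infinite cardinal `κ`.
Assume that no pair of distinct vertices of `W` lying in the same component of
`H` can be separated in `G` by at most `κ` edges. If a set `F` of at most `κ`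
edges of `H` separates two vertices `x ≠ y` lying in the same component of `H`,
then `F` separates `x` and `y` in the whole graph `G`. -/
theorem separates_in_whole_graph {V : Type*} (G : SimpleGraph V)
    (E₀ : Set (Sym2 V)) (hE₀ : E₀ ⊆ G.edgeSet)
    (H : SimpleGraph V) (hH : H = G.deleteEdges E₀)
    (W : Set V) (hW : W = {v | ∃ e ∈ E₀, v ∈ e})
    (κ : Cardinal) (hκ : Cardinal.aleph0 ≤ κ) (hE₀κ : Cardinal.mk E₀ ≤ κ)
    (hconn : ∀ u ∈ W, ∀ v ∈ W, u ≠ v → H.Reachable u v →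
      ∀ F' : Set (Sym2 V), F' ⊆ G.edgeSet → Cardinal.mk F' ≤ κ →
        (G.deleteEdges F').Reachable u v)
    (x y : V) (hxy : x ≠ y) (hreach : H.Reachable x y)
    (F : Set (Sym2 V)) (hF : F ⊆ H.edgeSet) (hFκ : Cardinal.mk F ≤ κ)
    (hsep : ¬ (H.deleteEdges F).Reachable x y) :
    ¬ (G.deleteEdges F).Reachable x y := by
  intro hG
  subst hH hW
  have hcomm : (G.deleteEdges F).deleteEdges E₀ = (G.deleteEdges E₀).deleteEdges F := by
    rw [SimpleGraph.deleteEdges_deleteEdges, SimpleGraph.deleteEdges_deleteEdges, Set.union_comm]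
  have hle : (G.deleteEdges E₀).deleteEdges F ≤ G.deleteEdges E₀ :=
    SimpleGraph.deleteEdges_le F
  have hx := reachable_or_exists_endpoint _ E₀ hG
  have hy := reachable_or_exists_endpoint _ E₀ hG.symm
  rw [hcomm] at hx hy
  rcases hx with hx | ⟨u, hu, hxu⟩
  · exact hsep hx
  rcases hy with hy | ⟨v, hv, hyv⟩
  · exact hsep hy.symm
  have huv : ((G.deleteEdges E₀).deleteEdges F).Reachable u v := by
    by_cases h : u = v
    · exact h ▸ SimpleGraph.Reachable.refl _
    · rw [SimpleGraph.deleteEdges_deleteEdges]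
      refine hconn u hu v hv h (((hxu.mono hle).symm.trans hreach).trans (hyv.mono hle)) _
        (Set.union_subset hE₀ fun e he => ?_) ?_
      · exact SimpleGraph.edgeSet_mono (SimpleGraph.deleteEdges_le E₀) (hF he)
      · exact (Cardinal.mk_union_le _ _).trans (Cardinal.add_le_of_le hκ hE₀κ hFκ)
  exact hsep ((hxu.trans huv).trans hyv.symm)
end
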